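/- Let C be a virtually-ℤ subgroup of a one-relator group with torsion G, and suppose that C is not contained in any infinite dihedral subgroup of G (i.e. there is no subgroup D of G with C ≤ D and D infinite dihedral). Then there exists a malnormal infinite cyclic subgroup M of G with C ≤ M. -/

import Mathlib

/-- A group is *virtually-ℤ* if it has a finite-index subgroup isomorphic to `ℤ`. -/
def VirtuallyZ (G : Type*) [Group G] : Prop :=
  ∃ H : Subgroup G, H.FiniteIndex ∧ Nonempty (H ≃* Multiplicative ℤ)

/-- A subgroup `M` of `G` is *malnormal* if `g M g⁻¹ ∩ M ≠ 1` implies `g ∈ M`. -/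
def Subgroup.IsMalnormal {G : Type*} [Group G] (M : Subgroup G) : Prop :=
  ∀ g : G, (∃ x : G, x ≠ 1 ∧ x ∈ M ∧ g * x * g⁻¹ ∈ M) → g ∈ M

/-- A group is a *free product of cyclic groups* if it is isomorphic to the free product
(`Monoid.CoprodI`) of a family of cyclic groups; every cyclic group is isomorphic to
`Multiplicative (ZMod m)` for some `m : ℕ` (with `m = 0` giving the infinite cyclic group). -/
def IsFreeProductOfCyclics (G : Type*) [Group G] : Prop :=
  ∃ (ι : Type) (m : ι → ℕ),
    Nonempty (G ≃* Monoid.CoprodI fun i => Multiplicative (ZMod (m i)))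

/-- A group is *freely decomposable* if it is isomorphic to a free product of two
nontrivial groups. -/
def FreelyDecomposable (G : Type*) [Group G] : Prop :=
  ∃ (H K : Type) (gH : Group H) (gK : Group K),
    Nontrivial H ∧ Nontrivial K ∧
      Nonempty (G ≃* (letI := gH; letI := gK; Monoid.Coprod H K))

/-- A group is *freely indecomposable* if it is not isomorphic to a free product of two
nontrivial groups. -/
def FreelyIndecomposable (G : Type*) [Group G] : Prop := ¬ FreelyDecomposable G

/-! ### Group theory: from centralizer control to malnormal cyclic subgroups -/

/-- Every centralizer of a nontrivial element is a finite union of cosets of the cyclic group. -/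
def CentralizerControl (G : Type*) [Group G] : Prop :=
  ∀ h : G, h ≠ 1 → ∃ T : Set G, T.Finite ∧
    ∀ g, g * h = h * g → ∃ γ ∈ T, ∃ i : ℤ, g = γ * h ^ i

section Finish
variable {G : Type*} [Group G]

lemma CentralizerControl.torsion_free (hG : CentralizerControl G) {h t : G}
    (hh : ¬ IsOfFinOrder h) (ht : t * h = h * t) (ht' : IsOfFinOrder t) : t = 1 := by
  by_contra hne
  obtain ⟨T, hT, hT2⟩ := hG t hne
  have hfin : ((fun p : G × G => p.1 * p.2) '' (T ×ˢ (Subgroup.zpowers t : Set G))).Finite := by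
    apply Set.Finite.image
    apply hT.prod
    rw [finite_zpowers]
    exact ht'
  have hsub : (Subgroup.zpowers h : Set G) ⊆
      ((fun p : G × G => p.1 * p.2) '' (T ×ˢ (Subgroup.zpowers t : Set G))) := by
    rintro _ ⟨k, rfl⟩
    have hc : Commute (h ^ k) t := (show Commute h t from ht.symm).zpow_left k
    obtain ⟨γ, hγ, i, hi⟩ := hT2 _ hc
    exact ⟨(γ, t ^ i), ⟨hγ, ⟨i, rfl⟩⟩, hi.symm⟩
  apply hh
  rw [← finite_zpowers]
  exact hfin.subset hsub

lemma CentralizerControl.cyclic (hG : CentralizerControl G) {h : G}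
    (hh : ¬ IsOfFinOrder h) : ∃ z : G, z * h = h * z ∧ ∀ g, g * h = h * g → ∃ i : ℤ, g = z ^ i := by
  have h1 : h ≠ 1 := by rintro rfl; exact hh IsOfFinOrder.one
  let Z := Subgroup.centralizer ({h} : Set G)
  have memZ : ∀ g, g ∈ Z ↔ g * h = h * g := by
    intro g
    simp only [Z, Subgroup.mem_centralizer_singleton_iff]
  let h' : Z := ⟨h, (memZ h).2 rfl⟩
  let A : Subgroup Z := Subgroup.zpowers h'
  have hAc : A ≤ Subgroup.center Z := by
    rw [Subgroup.zpowers_le, Subgroup.mem_center_iff]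
    intro g
    exact Subtype.ext ((memZ _).1 g.2)
  obtain ⟨T, hT, hT2⟩ := hG h h1
  have hAfin : A.FiniteIndex := by
    have : Finite (Z ⧸ A) := by
      have hf : Set.Finite ((fun z : Z => (z : Z ⧸ A)) '' {z : Z | (z : G) ∈ T}) := by
        apply Set.Finite.image
        exact hT.preimage (Subtype.val_injective.injOn)
      apply Set.finite_univ_iff.1
      apply hf.subset
      intro x _
      induction x using QuotientGroup.induction_on with
      | H z =>
        obtain ⟨γ, hγ, i, hi⟩ := hT2 z ((memZ _).1 z.2)
        have hγZ : γ ∈ Z := by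
          have : γ = z * (h ^ i)⁻¹ := by rw [hi]; group
          rw [this]
          exact Z.mul_mem z.2 (Z.inv_mem (Z.zpow_mem h'.2 i))
        refine ⟨⟨γ, hγZ⟩, hγ, ?_⟩
        rw [QuotientGroup.eq]
        refine ⟨i, ?_⟩
        apply Subtype.ext
        simp [hi, h']
    exact Subgroup.finiteIndex_of_finite_quotient
  have tf : ∀ t : Z, ∀ m : ℕ, m ≠ 0 → t ^ m = 1 → t = 1 := by
    intro t m hm ht
    apply Subtype.ext
    apply hG.torsion_free hh ((memZ _).1 t.2)
    rw [isOfFinOrder_iff_pow_eq_one]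
    exact ⟨m, Nat.pos_of_ne_zero hm, by simpa using congrArg Subtype.val ht⟩
  have hcfin : (Subgroup.center Z).FiniteIndex := Subgroup.finiteIndex_of_le hAc
  have hcomm : ∀ a b : Z, a * b = b * a := by
    intro a b
    have hinj : Function.Injective (MonoidHom.transferCenterPow Z) := by
      rw [injective_iff_map_eq_one]
      intro a ha
      apply tf a _ hcfin.index_ne_zero
      have := congrArg Subtype.val ha
      simpa [MonoidHom.transferCenterPow_apply] using this
    apply hinj
    rw [map_mul, map_mul]
    apply Subtype.ext
    exact ((Subgroup.mem_center_iff.1 (MonoidHom.transferCenterPow Z b).2) _)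
  letI : CommGroup Z := { (inferInstance : Group Z) with mul_comm := hcomm }
  have hmem : ∀ g : Z, g ^ A.index ∈ A := by
    intro g
    haveI : A.Normal := inferInstance
    exact Subgroup.pow_index_mem A g
  let f : Z →* A := 
    { toFun := fun g => ⟨g ^ A.index, hmem g⟩
      map_one' := by ext; simp
      map_mul' := by 
        intro a b
        apply Subtype.ext
        exact mul_pow a b _ }
  have hf : Function.Injective f := by
    rw [injective_iff_map_eq_one]
    intro a ha
    exact tf a _ hAfin.index_ne_zero (congrArg Subtype.val ha)
  haveI : IsCyclic Z := isCyclic_of_injective f hf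
  obtain ⟨z, hz⟩ := IsCyclic.exists_generator (α := Z)
  refine ⟨z, (memZ _).1 z.2, ?_⟩
  intro g hg
  obtain ⟨i, hi⟩ := hz ⟨g, (memZ g).2 hg⟩
  exact ⟨i, by simpa using (congrArg Subtype.val hi).symm⟩

theorem malnormal_of_centralizerControl (hG : CentralizerControl G) (C : Subgroup G)
    (hC : ∃ H : Subgroup C, H.FiniteIndex ∧ Nonempty (H ≃* Multiplicative ℤ))
    (hD : ¬ ∃ D : Subgroup G, C ≤ D ∧ Nonempty (D ≃* DihedralGroup 0)) :
    ∃ M : Subgroup G, (∀ g : G, (∃ x : G, x ≠ 1 ∧ x ∈ M ∧ g * x * g⁻¹ ∈ M) → g ∈ M) ∧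
      Nonempty (M ≃* Multiplicative ℤ) ∧ C ≤ M := by
  obtain ⟨H, hH, ⟨e⟩⟩ := hC
  let h₀ : H := e.symm (Multiplicative.ofAdd 1)
  have hgen : ∀ x : H, ∃ i : ℤ, x = h₀ ^ i := by
    intro x
    refine ⟨Multiplicative.toAdd (e x), ?_⟩
    apply e.injective
    rw [map_zpow]
    simp only [h₀, MulEquiv.apply_symm_apply]
    rw [← ofAdd_zsmul]
    simp
  have hinf : ∀ i : ℤ, h₀ ^ i = 1 → i = 0 := by
    intro i hi
    have := congrArg e hi
    rw [map_zpow] at this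
    simp only [h₀, MulEquiv.apply_symm_apply, map_one] at this
    rw [← ofAdd_zsmul] at this
    simpa using this
  let h : G := ((h₀ : C) : G)
  have hpow : ∀ i : ℤ, (((h₀ ^ i : H) : C) : G) = h ^ i := by intro i; simp [h]
  have hinf' : ∀ i : ℤ, h ^ i = 1 → i = 0 := by
    intro i hi
    apply hinf
    apply Subtype.ext
    apply Subtype.ext
    rw [hpow, hi]; rfl
  have inford : ∀ x : G, (∀ i : ℤ, x ^ i = 1 → i = 0) → ¬ IsOfFinOrder x := by
    intro x hx hfin
    obtain ⟨m, hm, hm2⟩ := isOfFinOrder_iff_pow_eq_one.1 hfin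
    have := hx m (by simpa using hm2)
    omega
  obtain ⟨z, hzh, hz⟩ := hG.cyclic (inford h hinf')
  obtain ⟨j, hj⟩ := hz h rfl
  have hzinf : ∀ i : ℤ, z ^ i = 1 → i = 0 := by
    intro i hi
    apply hinf'
    rw [hj, ← zpow_mul, mul_comm, zpow_mul, hi, one_zpow]
  have zinj : ∀ a b : ℤ, z ^ a = z ^ b → a = b := by
    intro a b hab
    have : z ^ (a - b) = 1 := by rw [zpow_sub, hab, mul_inv_cancel]
    have := hzinf _ this
    omega
  -- centralizers of nontrivial powers of z
  have hcent : ∀ (m : ℤ) (g : G), m ≠ 0 → g * z ^ m = z ^ m * g → ∃ i : ℤ, g = z ^ i := by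
    intro m g hm hg
    have hminf : ¬ IsOfFinOrder (z ^ m) := by
      apply inford
      intro i hi
      rw [← zpow_mul] at hi
      have := hzinf _ hi
      rcases mul_eq_zero.1 this with h | h
      · exact absurd h hm
      · exact h
    obtain ⟨w, -, hw⟩ := hG.cyclic hminf
    obtain ⟨a, ha⟩ := hw g hg
    obtain ⟨b, hb⟩ := hw z (((Commute.refl z).zpow_right m))
    apply hz
    rw [hj, hb, ha]
    exact ((((Commute.refl w).zpow_left a).zpow_right b).zpow_right j)
  have hnorm : ∀ (g : G) (a b : ℤ), a ≠ 0 → g * z ^ a * g⁻¹ = z ^ b →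
      g * z * g⁻¹ = z ∨ g * z * g⁻¹ = z⁻¹ := by
    intro g a b ha hab
    have hb : b ≠ 0 := by
      rintro rfl
      apply ha
      apply hzinf
      rw [zpow_zero] at hab
      have : z ^ a = g⁻¹ * (g * z ^ a * g⁻¹) * g := by group
      rw [this, hab]; group
    obtain ⟨i, hi⟩ := hcent b (g * z * g⁻¹) hb (by
      rw [← hab]
      have : g * z * g⁻¹ * (g * z ^ a * g⁻¹) = g * (z * z ^ a) * g⁻¹ := by group
      rw [this, ((Commute.refl z).zpow_right a).eq]
      group)
    obtain ⟨k, hk⟩ := hcent a (g⁻¹ * z * g) ha (by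
      have h1 : z ^ a = g⁻¹ * z ^ b * g := by rw [← hab]; group
      rw [h1]
      have : g⁻¹ * z * g * (g⁻¹ * z ^ b * g) = g⁻¹ * (z * z ^ b) * g := by group
      rw [this, ((Commute.refl z).zpow_right b).eq]
      group)
    have hik : z ^ (i * k) = z ^ (1 : ℤ) := by
      rw [zpow_mul, ← hi, conj_zpow, ← hk]; group
    have hik := zinj _ _ hik
    rcases Int.isUnit_iff.1 (IsUnit.of_mul_eq_one _ hik) with h | h
    · left; rw [hi, h, zpow_one]
    · right; rw [hi, h, zpow_neg, zpow_one]
  have hCn : ∀ c ∈ C, c * z * c⁻¹ = z ∨ c * z * c⁻¹ = z⁻¹ := by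
    intro c hc
    let c' : C := ⟨c, hc⟩
    obtain ⟨m, hm, -, hm2⟩ := Subgroup.exists_pow_mem_of_index_ne_zero hH.index_ne_zero
      (c' * (h₀ : C) * c'⁻¹)
    obtain ⟨i, hi⟩ := hgen ⟨_, hm2⟩
    have h3 := congrArg (fun x : H => ((x : C) : G)) hi
    simp only [hpow] at h3
    have h4 : (c * h * c⁻¹) ^ m = h ^ i := by rw [← h3]; simp [c', h]
    have hj0 : j ≠ 0 := by
      rintro rfl
      have := hinf' 1 (by rw [zpow_one, hj, zpow_zero])
      omega
    apply hnorm c (j * m) (j * i)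
    · exact mul_ne_zero hj0 (by omega)
    · rw [zpow_mul, zpow_mul, ← hj, ← h4, conj_pow, zpow_natCast]
  by_cases hinv : ∃ g : G, g * z * g⁻¹ = z⁻¹
  · exfalso
    apply hD
    obtain ⟨g, hg⟩ := hinv
    have hgi : ∀ i : ℤ, g * z ^ i = z ^ (-i) * g := by
      intro i
      have : g * z ^ i * g⁻¹ = z ^ (-i) := by rw [← conj_zpow, hg, inv_zpow, zpow_neg]
      rw [← this]; group
    have hg2 : g * g = 1 := by
      obtain ⟨i, hi⟩ := hcent 1 (g * g) one_ne_zero (by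
        have h1 := hgi 1
        have h2 := hgi (-1)
        rw [mul_assoc, h1, ← mul_assoc, h2]
        rw [neg_neg, mul_assoc])
      have h1 : g * (g * g) = z ^ (-i) * g := by rw [hi, hgi]
      have h2 : g * (g * g) = z ^ i * g := by rw [← mul_assoc, hi]
      have := zinj _ _ (mul_right_cancel (h1.symm.trans h2))
      have : i = 0 := by omega
      rw [hi, this, zpow_zero]
    have hgn : ∀ i : ℤ, g ≠ z ^ i := by
      intro i hi
      rw [hi] at hg
      have : z ^ (1 : ℤ) = z ^ (-1 : ℤ) := by
        rw [zpow_one, zpow_neg, zpow_one, ← hg]; group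
      have := zinj _ _ this
      omega
    let F : DihedralGroup 0 → G := fun d => match d with
      | DihedralGroup.r i => z ^ (show ℤ from i)
      | DihedralGroup.sr i => g * z ^ (show ℤ from i)
    have Fr : ∀ i : ℤ, F (DihedralGroup.r i) = z ^ i := fun i => rfl
    have Fsr : ∀ i : ℤ, F (DihedralGroup.sr i) = g * z ^ i := fun i => rfl
    have Fmul : ∀ a b, F (a * b) = F a * F b := by
      rintro (a | a) (b | b)
      · rw [DihedralGroup.r_mul_r]
        change z ^ ((show ℤ from a) + (show ℤ from b)) = z ^ (show ℤ from a) * z ^ (show ℤ from b)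
        rw [zpow_add]
      · rw [DihedralGroup.r_mul_sr]
        change g * z ^ ((show ℤ from b) - (show ℤ from a)) =
          z ^ (show ℤ from a) * (g * z ^ (show ℤ from b))
        have := hgi (-(show ℤ from a))
        rw [neg_neg] at this
        rw [← mul_assoc, ← this, mul_assoc, ← zpow_add]
        congr 2
        omega
      · rw [DihedralGroup.sr_mul_r]
        change g * z ^ ((show ℤ from a) + (show ℤ from b)) =
          (g * z ^ (show ℤ from a)) * z ^ (show ℤ from b)
        rw [zpow_add, mul_assoc]
      · rw [DihedralGroup.sr_mul_sr]
        change z ^ ((show ℤ from b) - (show ℤ from a)) =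
          (g * z ^ (show ℤ from a)) * (g * z ^ (show ℤ from b))
        rw [hgi, mul_assoc, ← mul_assoc g, hg2, one_mul, ← zpow_add]
        congr 1
        omega
    let Fh : DihedralGroup 0 →* G := MonoidHom.mk' F Fmul
    have Finj : Function.Injective Fh := by
      rw [injective_iff_map_eq_one]
      rintro (a | a) ha
      · have : (show ℤ from a) = 0 := hzinf _ ha
        have : a = 0 := this
        rw [this]; rfl
      · exfalso
        have h1 : g * z ^ (show ℤ from a) = 1 := ha
        apply hgn (-(show ℤ from a))
        rw [zpow_neg]; exact eq_inv_of_mul_eq_one_left h1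
    refine ⟨Fh.range, ?_, ⟨(MonoidHom.ofInjective Finj).symm⟩⟩
    intro c hc
    rcases hCn c hc with h | h
    · obtain ⟨i, hi⟩ := hcent 1 c one_ne_zero (by
        rw [zpow_one]
        nth_rw 2 [← h]
        group)
      exact ⟨DihedralGroup.r i, by rw [hi]; rfl⟩
    · obtain ⟨i, hi⟩ := hcent 1 (g⁻¹ * c) one_ne_zero (by
        rw [zpow_one]
        have h5 : c * z = z⁻¹ * c := by rw [← h]; group
        have h6 : g⁻¹ * z⁻¹ = z * g⁻¹ := by rw [← hg]; group
        rw [mul_assoc, h5, ← mul_assoc, h6, mul_assoc])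
      refine ⟨DihedralGroup.sr i, ?_⟩
      change g * z ^ i = c
      rw [← hi]; group
  · push Not at hinv
    have hself : ∀ g, g * z * g⁻¹ = z → g ∈ Subgroup.zpowers z := by
      intro g h
      obtain ⟨i, hi⟩ := hcent 1 g one_ne_zero (by
        rw [zpow_one]
        nth_rw 2 [← h]
        group)
      exact ⟨i, hi.symm⟩
    refine ⟨Subgroup.zpowers z, ?_, ?_, ?_⟩
    · rintro g ⟨_, hx1, ⟨a, rfl⟩, ⟨b, hb⟩⟩
      have ha : a ≠ 0 := by rintro rfl; exact hx1 (zpow_zero z)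
      rcases hnorm g a b ha hb.symm with h | h
      · exact hself g h
      · exact absurd h (hinv g)
    · let f : Multiplicative ℤ →* G := zpowersHom G z
      have hf : Function.Injective f := by
        intro a b hab
        have : z ^ (Multiplicative.toAdd a) = z ^ (Multiplicative.toAdd b) := hab
        exact Multiplicative.toAdd.injective (zinj _ _ this)
      have hr : f.range = Subgroup.zpowers z := rfl
      rw [← hr]
      exact ⟨(MonoidHom.ofInjective hf).symm⟩
    · intro c hc
      rcases hCn c hc with h | h
      · exact hself c h
      · exact absurd h (hinv c)

end Finish


/-! ### A bi-ordering of free groups (Magnus) -/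

section Magnus
variable {X : Type} [DecidableEq X]

/-- linear automorphisms of the space of series -/
abbrev MagE (X : Type) := (List X → ℤ) ≃ₗ[ℤ] (List X → ℤ)

/-- left multiplication by `1 + x` on noncommutative power series -/
def magT (x : X) (f : List X → ℤ) : List X → ℤ
  | [] => f []
  | y :: m => f (y :: m) + if y = x then f m else 0

/-- the inverse of `magT` -/
def magTinv (x : X) (f : List X → ℤ) : List X → ℤ
  | [] => f []
  | y :: m => f (y :: m) - if y = x then magTinv x f m else 0

/-- `magT` as an automorphism -/
def magAut (x : X) : MagE X where
  toFun := magT x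
  invFun := magTinv x
  left_inv := by
    intro f
    funext m
    induction m with
    | nil => rfl
    | cons y m ih =>
      simp only [magTinv, ih, magT]
      ring
  right_inv := by
    intro f
    funext m
    cases m with
    | nil => rfl
    | cons y m => simp [magTinv, magT]
  map_add' := by
    intro f g
    funext m
    cases m with
    | nil => rfl
    | cons y m =>
      simp only [magT, Pi.add_apply]
      split_ifs <;> ring
  map_smul' := by
    intro k f
    funext m
    cases m with
    | nil => rfl
    | cons y m =>
      simp only [magT, Pi.smul_apply, smul_eq_mul, RingHom.id_apply]
      split_ifs <;> ring

/-- reversal of series -/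
def magRev : MagE X where
  toFun f m := f m.reverse
  invFun f m := f m.reverse
  left_inv := by intro f; funext m; simp
  right_inv := by intro f; funext m; simp
  map_add' := by intro f g; rfl
  map_smul' := by intro k f; rfl

/-- right multiplication -/
def magS (x : X) : MagE X := magRev * magAut x * magRev

/-- the unit series -/
def magOne : List X → ℤ := fun m => if m = [] then 1 else 0

/-- the Magnus representation -/
def magRep : FreeGroup X →* MagE X := FreeGroup.lift magAut

lemma magAut_apply (x : X) (f : List X → ℤ) : magAut x f = magT x f := rfl
lemma magAut_inv_apply (x : X) (f : List X → ℤ) : (magAut x)⁻¹ f = magTinv x f := rfl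

lemma magS_apply (x : X) (f : List X → ℤ) (m : List X) :
    magS x f m = magT x (fun m => f m.reverse) m.reverse := rfl

lemma magS_nil (x : X) (f : List X → ℤ) : magS x f [] = f [] := rfl

lemma magS_concat (x y : X) (f : List X → ℤ) (m : List X) :
    magS x f (m ++ [y]) = f (m ++ [y]) + if y = x then f m else 0 := by
  rw [magS_apply]
  simp [magT]

lemma magS_comm (x y : X) (f : List X → ℤ) : magS y (magAut x f) = magAut x (magS y f) := by
  funext m
  rw [magAut_apply, magAut_apply]
  rcases List.eq_nil_or_concat m with rfl | ⟨m, b, rfl⟩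
  · rfl
  · rw [List.concat_eq_append, magS_concat]
    cases m with
    | nil =>
      have h1 := magS_concat y b f []
      simp only [List.nil_append] at h1
      simp only [List.nil_append, magT, magS_nil, h1]
      ring
    | cons a m =>
      have h1 := magS_concat y b f (a :: m)
      have h2 := magS_concat y b f m
      simp only [List.cons_append] at h1
      simp only [List.cons_append, magT, h1, h2]
      split_ifs <;> ring

lemma magS_one (x : X) : magS x magOne = magAut x (magOne : List X → ℤ) := by
  funext m
  rw [magAut_apply]
  rcases List.eq_nil_or_concat m with rfl | ⟨m, b, rfl⟩
  · rfl
  · rw [List.concat_eq_append, magS_concat]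
    cases m with
    | nil => simp [magT, magOne]
    | cons a m => simp [magT, magOne]

lemma magRep_comm (x : X) (g : FreeGroup X) :
    magS x * magRep g = magRep g * magS x := by
  have : Commute (magS x) (magRep g) := by
    induction g using FreeGroup.induction_on with
    | C1 => rw [map_one]; exact Commute.one_right _
    | of y =>
      apply LinearEquiv.ext
      intro f
      have := magS_comm y x f
      simpa [magRep] using this
    | inv_of y h => rw [map_inv]; exact h.inv_right
    | mul a b ha hb => rw [map_mul]; exact ha.mul_right hb
  exact this

lemma magRep_conj (x : X) (g : FreeGroup X) :
    magRep (FreeGroup.of x * g * (FreeGroup.of x)⁻¹) magOne =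
      magAut x ((magS x)⁻¹ (magRep g magOne)) := by
  have h1 : (magAut x)⁻¹ magOne = (magS x)⁻¹ (magOne : List X → ℤ) := by
    have h := magS_one x
    apply (magS x).injective
    have e1 : magS x ((magS x)⁻¹ (magOne : List X → ℤ)) = magOne := 
      (magS x).apply_symm_apply magOne
    rw [e1]
    have e2 := magS_comm x x ((magAut x)⁻¹ (magOne : List X → ℤ))
    have e3 : magAut x ((magAut x)⁻¹ (magOne : List X → ℤ)) = magOne := 
      (magAut x).apply_symm_apply magOne
    rw [e3, h] at e2
    exact ((magAut x).injective e2).symm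
  have h2 : magRep g * (magS x)⁻¹ = (magS x)⁻¹ * magRep g := by
    have : Commute (magS x) (magRep g) := magRep_comm x g
    exact this.inv_left.eq.symm
  rw [map_mul, map_mul, map_inv]
  have h3 : magRep (FreeGroup.of x) = magAut x := by simp [magRep]
  rw [h3]
  change magAut x (magRep g ((magAut x)⁻¹ magOne)) = _
  rw [h1]
  change magAut x ((magRep g * (magS x)⁻¹) magOne) = _
  rw [h2]
  rfl

/-- a signed power of `magAut` for a letter -/
def magLetter (p : X × Bool) : MagE X := cond p.2 (magAut p.1) (magAut p.1)⁻¹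

/-- sign of a letter -/
def magSign (b : Bool) : ℤ := cond b 1 (-1)

lemma magLetter_ne (p : X × Bool) (f : List X → ℤ) (m : List X) (h : m.head? ≠ some p.1) :
    magLetter p f m = f m := by
  rcases p with ⟨x, b⟩
  cases m with
  | nil => cases b <;> rfl
  | cons y m =>
    have : y ≠ x := by simpa using h
    cases b
    · change magTinv x f (y :: m) = _
      simp [magTinv, this]
    · change magT x f (y :: m) = _
      simp [magT, this]

lemma magLetter_eq (x : X) (b : Bool) (f : List X → ℤ) (m : List X) (h : m.head? ≠ some x) :
    magLetter (x, b) f (x :: m) = f (x :: m) + magSign b * f m := by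
  have h1 := magLetter_ne (x, b) f m h
  cases b
  · change magTinv x f m = f m at h1
    change magTinv x f (x :: m) = _
    simp [magTinv, magSign, h1]
    ring
  · change magT x f (x :: m) = _
    simp [magT, magSign]

lemma magRep_mk (l : List (X × Bool)) : magRep (FreeGroup.mk l) = (l.map magLetter).prod := by
  simp only [magRep, FreeGroup.lift_mk]
  rfl

lemma mag_key (p : X × Bool) (w : List (X × Bool)) (hw : FreeGroup.IsReduced (p :: w)) :
    ∃ (m : List X) (e : ℕ) (c : ℤ), c ≠ 0 ∧ m.head? ≠ some p.1 ∧ m.IsChain (· ≠ ·) ∧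
      ((p :: w).map magLetter).prod magOne m = c ∧
      ((p :: w).map magLetter).prod magOne (p.1 :: m) = magSign p.2 * (e + 1) * c ∧
      (∀ m' : List X, m'.IsChain (· ≠ ·) → m.length + 1 < m'.length →
        ((p :: w).map magLetter).prod magOne m' = 0) ∧
      (∀ m' : List X, m'.IsChain (· ≠ ·) → m.length + 1 = m'.length → m'.head? ≠ some p.1 →
        ((p :: w).map magLetter).prod magOne m' = 0) := by
  induction w generalizing p with
  | nil =>
    have hx : (([p] : List (X × Bool)).map magLetter).prod = magLetter p := by simp
    rw [hx]
    rcases p with ⟨x, b⟩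
    refine ⟨[], 0, 1, one_ne_zero, by simp, by simp, ?_, ?_, ?_, ?_⟩
    · rw [magLetter_ne _ _ _ (by simp)]; simp [magOne]
    · rw [magLetter_eq _ _ _ _ (by simp)]; simp [magOne]
    · intro m' hm' hlen
      cases m' with
      | nil => simp at hlen
      | cons y m' =>
        have hm0 : m' ≠ [] := by rintro rfl; simp at hlen
        by_cases hy : y = x
        · subst hy
          rw [magLetter_eq]
          · simp [magOne, hm0]
          · cases m' with
            | nil => simp
            | cons z m' =>
              have := (List.isChain_cons_cons.1 hm').1
              simpa using this.symm
        · rw [magLetter_ne _ _ _ (by simpa using hy)]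
          simp [magOne]
    · intro m' hm' hlen hh
      rw [magLetter_ne _ _ _ hh]
      have : m' ≠ [] := by rintro rfl; simp at hlen
      simp [magOne, this]
  | cons q w ih =>
    have hred : FreeGroup.IsReduced (q :: w) := by
      unfold FreeGroup.IsReduced at hw ⊢
      exact (List.isChain_cons_cons.1 hw).2
    have hpq : p.1 = q.1 → p.2 = q.2 := by
      unfold FreeGroup.IsReduced at hw
      exact (List.isChain_cons_cons.1 hw).1
    obtain ⟨m, e, c, hc, hh, hch, h1, h2, h3, h4⟩ := ih q hred
    set f := ((q :: w).map magLetter).prod magOne with hf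
    have hx : ((p :: q :: w).map magLetter).prod magOne = magLetter p f := rfl
    rw [hx]
    have hqm : (q.1 :: m).IsChain (· ≠ ·) := by
      cases m with
      | nil => simp
      | cons z m =>
        rw [List.isChain_cons_cons]
        refine ⟨?_, hch⟩
        intro h
        exact hh (by simp [h])
    rcases p with ⟨x, b⟩
    rcases q with ⟨y, b'⟩
    by_cases hxy : x = y
    · subst hxy
      have hbb : b = b' := hpq rfl
      subst hbb
      refine ⟨m, e + 1, c, hc, hh, hch, ?_, ?_, ?_, ?_⟩
      · rw [magLetter_ne _ _ _ hh, h1]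
      · rw [magLetter_eq _ _ _ _ hh, h1, h2]; push_cast; ring
      · intro m' hm' hlen
        by_cases hhd : m'.head? = some x
        · cases m' with
          | nil => simp at hhd
          | cons z m' =>
            have : z = x := by simpa using hhd
            subst this
            have hz : m'.head? ≠ some z := by
              cases m' with
              | nil => simp
              | cons u m' =>
                have := (List.isChain_cons_cons.1 hm').1
                simpa using this.symm
            have hm'' : m'.IsChain (· ≠ ·) := hm'.tail
            rw [magLetter_eq _ _ _ _ hz, h3 _ hm' hlen]
            simp only [List.length_cons] at hlen
            rcases Nat.lt_or_ge (m.length + 1) m'.length with h | h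
            · rw [h3 _ hm'' h]; ring
            · rw [h4 _ hm'' (by omega) hz]; ring
        · rw [magLetter_ne _ _ _ hhd, h3 _ hm' hlen]
      · intro m' hm' hlen hhd
        rw [magLetter_ne _ _ _ hhd, h4 _ hm' hlen hhd]
    · have hyx : (y :: m).head? ≠ some x := by simpa using fun h => hxy h.symm
      have hs : magSign b' ≠ 0 := by cases b' <;> simp [magSign]
      refine ⟨y :: m, 0, magSign b' * (e + 1) * c, ?_, hyx, hqm, ?_, ?_, ?_, ?_⟩
      · exact mul_ne_zero (mul_ne_zero hs (by positivity)) hc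
      · rw [magLetter_ne _ _ _ hyx, h2]
      · rw [magLetter_eq _ _ _ _ hyx, h2, h3]
        · simp
        · rw [List.isChain_cons_cons]; exact ⟨hxy, hqm⟩
        · simp
      · intro m' hm' hlen
        simp only [List.length_cons] at hlen
        by_cases hhd : m'.head? = some x
        · cases m' with
          | nil => simp at hhd
          | cons z m' =>
            have : z = x := by simpa using hhd
            subst this
            have hz : m'.head? ≠ some z := by
              cases m' with
              | nil => simp
              | cons u m' =>
                have := (List.isChain_cons_cons.1 hm').1
                simpa using this.symm
            have hm'' : m'.IsChain (· ≠ ·) := hm'.tail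
            simp only [List.length_cons] at hlen
            rw [magLetter_eq _ _ _ _ hz, h3 _ hm' (by simp; omega), h3 _ hm'' (by omega)]
            ring
        · rw [magLetter_ne _ _ _ hhd, h3 _ hm' (by omega)]
      · intro m' hm' hlen hhd
        simp only [List.length_cons] at hlen
        rw [magLetter_ne _ _ _ hhd, h3 _ hm' (by omega)]

lemma magRep_inj (g : FreeGroup X) (hg : magRep g magOne = magOne) : g = 1 := by
  rw [← FreeGroup.mk_toWord (x := g)]
  have hred := FreeGroup.isReduced_toWord (x := g)
  rw [← FreeGroup.mk_toWord (x := g), magRep_mk] at hg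
  cases hw : g.toWord with
  | nil => rfl
  | cons p w =>
    exfalso
    rw [hw] at hg hred
    obtain ⟨m, e, c, hc, -, -, -, h2, -, -⟩ := mag_key p w hred
    rw [hg] at h2
    have hs : magSign p.2 ≠ 0 := by cases p.2 <;> simp [magSign]
    have := mul_ne_zero (mul_ne_zero hs (show ((e : ℤ) + 1) ≠ 0 by positivity)) hc
    rw [← h2] at this
    simp [magOne] at this

/-- leading coefficients agree with a shift-by-lower-terms operator -/
lemma magAut_lead [LinearOrder (List X)] (hlen : ∀ a b : List X, a.length < b.length → a < b)
    (x : X) (D : List X → ℤ) (m : List X) (h : ∀ m' < m, D m' = 0) :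
    (∀ m' < m, magAut x D m' = 0) ∧ magAut x D m = D m := by
  have key : ∀ m', (∀ m'' < m', D m'' = 0) → magAut x D m' = D m' := by
    intro m' hm'
    rw [magAut_apply]
    cases m' with
    | nil => rfl
    | cons y m' =>
      simp only [magT]
      rw [hm' m' (hlen _ _ (by simp))]
      simp
  refine ⟨fun m' hm' => ?_, key m h⟩
  rw [key m' (fun m'' hm'' => h _ (hm''.trans hm')), h _ hm']

lemma magS_lead [LinearOrder (List X)] (hlen : ∀ a b : List X, a.length < b.length → a < b)
    (x : X) (D : List X → ℤ) (m : List X) (h : ∀ m' < m, D m' = 0) :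
    (∀ m' < m, magS x D m' = 0) ∧ magS x D m = D m := by
  have key : ∀ m', (∀ m'' < m', D m'' = 0) → magS x D m' = D m' := by
    intro m' hm'
    rcases List.eq_nil_or_concat m' with rfl | ⟨m', b, rfl⟩
    · rfl
    · rw [List.concat_eq_append] at hm' ⊢
      rw [magS_concat]
      rw [hm' m' (hlen _ _ (by simp))]
      simp
  refine ⟨fun m' hm' => ?_, key m h⟩
  rw [key m' (fun m'' hm'' => h _ (hm''.trans hm')), h _ hm']

lemma mag_inv_lead [LinearOrder (List X)] [WellFoundedLT (List X)] (A : MagE X)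
    (hA : ∀ (D : List X → ℤ) (m : List X), (∀ m' < m, D m' = 0) →
      (∀ m' < m, A D m' = 0) ∧ A D m = D m)
    (D : List X → ℤ) (m : List X) (h : ∀ m' < m, D m' = 0) :
    (∀ m' < m, A⁻¹ D m' = 0) ∧ A⁻¹ D m = D m := by
  have hAA : A (A⁻¹ D) = D := A.apply_symm_apply D
  have key : ∀ m' < m, A⁻¹ D m' = 0 := by
    intro m'
    induction m' using WellFoundedLT.induction with
    | ind m' ih =>
      intro hm'
      have := (hA (A⁻¹ D) m' (fun m'' h'' => ih m'' h'' (h''.trans hm'))).2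
      rw [hAA, h _ hm'] at this
      exact this.symm
  refine ⟨key, ?_⟩
  have := (hA (A⁻¹ D) m key).2
  rw [hAA] at this
  exact this.symm

lemma magLex_lt_iff [LinearOrder (List X)] [WellFoundedLT (List X)] (f g : List X → ℤ) :
    toLex f < toLex g ↔ ∃ m, (∀ m' < m, (g - f) m' = 0) ∧ 0 < (g - f) m := by
  change Pi.Lex _ _ _ _ ↔ _
  simp only [Pi.Lex, Pi.sub_apply, sub_eq_zero, sub_pos]
  constructor
  · rintro ⟨i, h1, h2⟩
    exact ⟨i, fun j hj => (h1 j hj).symm, h2⟩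
  · rintro ⟨i, h1, h2⟩
    exact ⟨i, fun j hj => (h1 j hj).symm, h2⟩

lemma magLex_lt_aut [LinearOrder (List X)] [WellFoundedLT (List X)] (A : MagE X)
    (hA : ∀ (D : List X → ℤ) (m : List X), (∀ m' < m, D m' = 0) →
      (∀ m' < m, A D m' = 0) ∧ A D m = D m) (f g : List X → ℤ) (h : toLex f < toLex g) :
    toLex (A f) < toLex (A g) := by
  rw [magLex_lt_iff] at h ⊢
  obtain ⟨m, h1, h2⟩ := h
  refine ⟨m, ?_⟩
  rw [← map_sub]
  obtain ⟨h3, h4⟩ := hA _ m h1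
  exact ⟨h3, by rw [h4]; exact h2⟩

end Magnus

theorem exists_conj_invariant_order (X : Type) :
    ∃ lo : LinearOrder (FreeGroup X), ∀ (c a b : FreeGroup X), a < b →
      c * a * c⁻¹ < c * b * c⁻¹ := by
  classical
  obtain ⟨lo1, hwf1⟩ := exists_wellFoundedLT (List X)
  let W := List X
  let lo2 : LinearOrder (List X) :=
    @LinearOrder.lift' (List X) (ℕ ×ₗ List X) (@Prod.Lex.instLinearOrder ℕ (List X) _ lo1)
      (fun m => toLex (m.length, m)) (by
        intro a b hab
        exact (Prod.ext_iff.1 (toLex.injective hab)).2)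
  have lt2 : ∀ a b : List X, lo2.lt a b ↔ a.length < b.length ∨ 
      (a.length = b.length ∧ lo1.lt a b) := by
    intro a b
    exact @Prod.Lex.lt_iff ℕ (List X) _ (lo1.toLT) _ _
  have hwf2 : @WellFoundedLT (List X) lo2.toLT := by
    constructor
    have : WellFounded (Prod.Lex (fun a b : ℕ => a < b) lo1.lt) :=
      WellFounded.prod_lex Nat.lt_wfRel.wf hwf1.wf
    refine Subrelation.wf (r := InvImage (Prod.Lex (fun a b : ℕ => a < b) lo1.lt)
      (fun m : List X => (m.length, m))) ?_ (InvImage.wf _ this)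
    intro a b hab
    exact Prod.lex_def.2 ((lt2 a b).1 hab)
  clear_value lo2
  have hlen : ∀ a b : List X, a.length < b.length → lo2.lt a b := fun a b h => (lt2 a b).2 (Or.inl h)
  clear lt2 hwf1 lo1
  have hinj : Function.Injective
      (fun g : FreeGroup X => (toLex (magRep g magOne) : Lex (List X → ℤ))) := by
    intro a b hab
    have h : magRep a magOne = magRep b (magOne : List X → ℤ) := toLex.injective hab
    have : magRep (a⁻¹ * b) magOne = (magOne : List X → ℤ) := by
      rw [map_mul, map_inv]
      change (magRep a)⁻¹ (magRep b magOne) = _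
      rw [← h]
      exact (magRep a).symm_apply_apply magOne
    have := magRep_inj _ this
    exact (inv_mul_eq_one.1 this)
  refine ⟨LinearOrder.lift' _ hinj, ?_⟩
  intro c
  have hiff : ∀ a b : FreeGroup X, (LinearOrder.lift' _ hinj).lt a b ↔
    (toLex (magRep a magOne) : Lex (List X → ℤ)) < toLex (magRep b magOne) := fun a b => Iff.rfl
  change ∀ a b, (LinearOrder.lift' _ hinj).lt a b → (LinearOrder.lift' _ hinj).lt _ _
  simp only [hiff]
  clear hiff hinj
  have hx : ∀ (x : X) (a b : FreeGroup X),
      (toLex (magRep a magOne) : Lex (List X → ℤ)) < toLex (magRep b magOne) →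
      (toLex (magRep (FreeGroup.of x * a * (FreeGroup.of x)⁻¹) magOne) : Lex (List X → ℤ)) <
        toLex (magRep (FreeGroup.of x * b * (FreeGroup.of x)⁻¹) magOne) := by
    intro x a b hab
    rw [magRep_conj x a, magRep_conj x b]
    apply magLex_lt_aut _ (magAut_lead hlen x)
    exact magLex_lt_aut _ (mag_inv_lead _ (magS_lead hlen x)) _ _ hab
  induction c using FreeGroup.induction_on with
  | C1 => intro a b hab; simpa using hab
  | of x => exact hx x
  | inv_of x _ =>
    intro a b hab
    rcases lt_trichotomy
      (toLex (magRep ((FreeGroup.of x)⁻¹ * a * ((FreeGroup.of x)⁻¹)⁻¹) magOne) : Lex (List X → ℤ))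
      (toLex (magRep ((FreeGroup.of x)⁻¹ * b * ((FreeGroup.of x)⁻¹)⁻¹) magOne)) with h | h | h
    · exact h
    · exfalso
      have h' : magRep ((FreeGroup.of x)⁻¹ * a * ((FreeGroup.of x)⁻¹)⁻¹) magOne =
        magRep ((FreeGroup.of x)⁻¹ * b * ((FreeGroup.of x)⁻¹)⁻¹) (magOne : List X → ℤ) :=
        toLex.injective h
      have h2 := magRep_inj (((FreeGroup.of x)⁻¹ * a * ((FreeGroup.of x)⁻¹)⁻¹)⁻¹ *
        ((FreeGroup.of x)⁻¹ * b * ((FreeGroup.of x)⁻¹)⁻¹)) (by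
          rw [map_mul, map_inv]
          change (magRep _)⁻¹ (magRep _ magOne) = _
          rw [← h']
          exact (magRep _).symm_apply_apply magOne)
      have h3 := inv_mul_eq_one.1 h2
      have h4 : a = b := mul_left_cancel (mul_right_cancel h3)
      rw [h4] at hab
      exact lt_irrefl _ hab
    · exfalso
      have := hx x _ _ h
      simp only [inv_inv, mul_assoc, mul_inv_cancel_left, mul_inv_cancel, mul_one] at this
      exact lt_asymm hab this
  | mul u v hu hv =>
    intro a b hab
    have := hu _ _ (hv _ _ hab)
    simpa [mul_assoc] using this


/-! ### Cochains on sets with an action of a free group -/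

section Cochain
variable {X : Type} {Ω : Type} [MulAction (FreeGroup X) Ω] {K : Type} [Group K]

/-- the group element of a letter -/
def ltr (p : X × Bool) : FreeGroup X := FreeGroup.mk [p]

lemma ltr_true (x : X) : ltr (x, true) = FreeGroup.of x := rfl

lemma ltr_not (x : X) (b : Bool) : ltr (x, !b) = (ltr (x, b))⁻¹ := by
  simp [ltr, FreeGroup.inv_mk, FreeGroup.invRev]

lemma mk_cons_ltr (p : X × Bool) (l : List (X × Bool)) :
    FreeGroup.mk (p :: l) = ltr p * FreeGroup.mk l := by
  simp [ltr, FreeGroup.mul_mk]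

lemma ltr_eq (p : X × Bool) : ltr p = cond p.2 (FreeGroup.of p.1) (FreeGroup.of p.1)⁻¹ := by
  rcases p with ⟨x, b⟩
  cases b
  · exact ltr_not x true
  · rfl

/-- the edge traversed when reading the letter `p` at `u` -/
def edgeOf (p : X × Bool) (u : Ω) : Ω × X := (cond p.2 u (ltr p • u), p.1)

/-- the edges traversed when reading a word (from right to left) -/
def wordEdges : List (X × Bool) → Ω → List (Ω × X)
  | [], _ => []
  | p :: l, ω => edgeOf p (FreeGroup.mk l • ω) :: wordEdges l ω

lemma wordEdges_append (a t : List (X × Bool)) (ω : Ω) :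
    wordEdges (a ++ t) ω = wordEdges a (FreeGroup.mk t • ω) ++ wordEdges t ω := by
  induction a with
  | nil => rfl
  | cons p a ih =>
    simp only [List.cons_append, wordEdges, ih]
    rw [smul_smul, FreeGroup.mul_mk]

lemma wordEdges_length (l : List (X × Bool)) (ω : Ω) : (wordEdges l ω).length = l.length := by
  induction l with
  | nil => rfl
  | cons p l ih => simp [wordEdges, ih]

/-- one step of the twisted action -/
def actGen (φ : Ω × X → K) (x : X) : Equiv.Perm (Ω × K) where
  toFun a := (FreeGroup.of x • a.1, φ (a.1, x) * a.2)
  invFun a := ((FreeGroup.of x)⁻¹ • a.1, (φ ((FreeGroup.of x)⁻¹ • a.1, x))⁻¹ * a.2)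
  left_inv := by intro a; simp
  right_inv := by intro a; simp

/-- the twisted action -/
def actC (φ : Ω × X → K) : FreeGroup X →* Equiv.Perm (Ω × K) := FreeGroup.lift (actGen φ)

/-- the value of a cochain along the path `w` from `ω` -/
def pathVal (φ : Ω × X → K) (w : FreeGroup X) (ω : Ω) : K := (actC φ w (ω, 1)).2

lemma actC_apply (φ : Ω × X → K) (w : FreeGroup X) (ω : Ω) (c : K) :
    actC φ w (ω, c) = (w • ω, pathVal φ w ω * c) := by
  have key : ∀ (w : FreeGroup X) (ω : Ω) (c : K),
      (actC φ w (ω, c)).1 = w • ω ∧ ∀ c', (actC φ w (ω, c * c')).2 = (actC φ w (ω, c)).2 * c' := by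
    intro w
    induction w using FreeGroup.induction_on with
    | C1 => intro ω c; simp
    | of x => intro ω c; simp [actC, actGen, mul_assoc]
    | inv_of x _ =>
      intro ω c
      have : ∀ a, (actC φ (FreeGroup.of x)⁻¹) a = (actGen φ x).symm a := by
        intro a; rw [map_inv]; simp [actC]
      simp only [this]
      simp [actGen, mul_assoc]
    | mul u v hu hv =>
      intro ω c
      have h1 : ∀ a, actC φ (u * v) a = actC φ u (actC φ v a) := by
        intro a; rw [map_mul]; rfl
      rw [h1]
      have hv1 := (hv ω c).1
      refine ⟨?_, fun c' => ?_⟩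
      · rw [show actC φ v (ω, c) = (v • ω, (actC φ v (ω, c)).2) from Prod.ext hv1 rfl]
        rw [(hu _ _).1, smul_smul]
      · rw [h1]
        rw [show actC φ v (ω, c) = (v • ω, (actC φ v (ω, c)).2) from Prod.ext hv1 rfl]
        rw [show actC φ v (ω, c * c') = (v • ω, (actC φ v (ω, c)).2 * c') from
          Prod.ext (hv ω (c * c')).1 ((hv ω c).2 c')]
        rw [(hu _ _).2]
  refine Prod.ext (key w ω c).1 ?_
  have := (key w ω 1).2 c
  rw [one_mul] at this
  exact this

lemma pathVal_one (φ : Ω × X → K) (ω : Ω) : pathVal φ 1 ω = 1 := by simp [pathVal]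

lemma pathVal_mul (φ : Ω × X → K) (v w : FreeGroup X) (ω : Ω) :
    pathVal φ (v * w) ω = pathVal φ v (w • ω) * pathVal φ w ω := by
  have : actC φ (v * w) (ω, 1) = actC φ v (actC φ w (ω, 1)) := by rw [map_mul]; rfl
  rw [pathVal, this, actC_apply, actC_apply, mul_one]

lemma pathVal_of (φ : Ω × X → K) (x : X) (ω : Ω) : pathVal φ (FreeGroup.of x) ω = φ (ω, x) := by
  simp [pathVal, actC, actGen]

lemma pathVal_inv (φ : Ω × X → K) (w : FreeGroup X) (ω : Ω) :
    pathVal φ w⁻¹ ω = (pathVal φ w (w⁻¹ • ω))⁻¹ := by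
  have := pathVal_mul φ w w⁻¹ ω
  rw [mul_inv_cancel, pathVal_one] at this
  exact eq_inv_of_mul_eq_one_right this.symm

lemma pathVal_ltr (φ : Ω × X → K) (p : X × Bool) (ω : Ω) :
    pathVal φ (ltr p) ω = cond p.2 (φ (edgeOf p ω)) (φ (edgeOf p ω))⁻¹ := by
  rcases p with ⟨x, b⟩
  cases b
  · rw [ltr_eq]
    simp only [cond_false, edgeOf]
    rw [pathVal_inv, pathVal_of, ltr_eq]
    rfl
  · exact pathVal_of φ x ω

lemma pathVal_cons (φ : Ω × X → K) (p : X × Bool) (l : List (X × Bool)) (ω : Ω) :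
    pathVal φ (FreeGroup.mk (p :: l)) ω =
      pathVal φ (ltr p) (FreeGroup.mk l • ω) * pathVal φ (FreeGroup.mk l) ω := by
  rw [mk_cons_ltr, pathVal_mul]

lemma pathVal_congr (φ φ' : Ω × X → K) (l : List (X × Bool)) (ω : Ω)
    (h : ∀ e ∈ wordEdges l ω, φ e = φ' e) :
    pathVal φ (FreeGroup.mk l) ω = pathVal φ' (FreeGroup.mk l) ω := by
  induction l with
  | nil =>
    change pathVal φ 1 ω = pathVal φ' 1 ω
    rw [pathVal_one, pathVal_one]
  | cons p l ih =>
    simp only [wordEdges, List.mem_cons, forall_eq_or_imp] at h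
    rw [pathVal_cons, pathVal_cons, ih h.2, pathVal_ltr, pathVal_ltr, h.1]

lemma pathVal_pow_period (φ : Ω × X → K) (w : FreeGroup X) (ω : Ω) (h : w • ω = ω) (k : ℕ) :
    pathVal φ (w ^ k) ω = pathVal φ w ω ^ k := by
  induction k with
  | zero => simp [pathVal_one]
  | succ k ih => rw [pow_succ, pathVal_mul, h, ih, pow_succ]

lemma pathVal_conj_one (φ : Ω × X → K) (u w : FreeGroup X) (ω : Ω) (h : w • u⁻¹ • ω = u⁻¹ • ω)
    (h1 : pathVal φ w (u⁻¹ • ω) = 1) : pathVal φ (u * w * u⁻¹) ω = 1 := by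
  rw [pathVal_mul, pathVal_mul, h1, h, pathVal_inv, mul_one, mul_inv_cancel]

/-- multiplicativity in the cochain, commutative coefficients -/
lemma pathVal_cochain_mul {A : Type} [CommGroup A] (φ φ' : Ω × X → A) (w : FreeGroup X) (ω : Ω) :
    pathVal (φ * φ') w ω = pathVal φ w ω * pathVal φ' w ω := by
  classical
  rw [← FreeGroup.mk_toWord (x := w)]
  generalize w.toWord = l
  induction l with
  | nil =>
    change pathVal _ 1 ω = pathVal φ 1 ω * pathVal φ' 1 ω
    simp [pathVal_one]
  | cons p l ih =>
    rw [pathVal_cons, pathVal_cons, pathVal_cons, ih, pathVal_ltr, pathVal_ltr, pathVal_ltr]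
    cases p.2 <;> simp only [cond_true, cond_false, Pi.mul_apply, mul_inv] <;>
      rw [mul_mul_mul_comm]

end Cochain


/-! ### Cyclically reduced words as periodic sequences of letters -/

/-- a cyclically reduced cyclic word of length `L` -/
structure CycData (X : Type) where
  /-- letters, rightmost first -/
  y : ℕ → X × Bool
  /-- length -/
  L : ℕ
  hL : 0 < L
  per : ∀ t, y (t + L) = y t
  red : ∀ t, y (t + 1) ≠ ((y t).1, !(y t).2)

namespace CycData
variable {X : Type} (D : CycData X)

/-- the list of `k` letters starting at index `a` -/
def seg (a : ℕ) : ℕ → List (X × Bool)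
  | 0 => []
  | k + 1 => D.y (a + k) :: seg a k

/-- suffix elements -/
def s (t : ℕ) : FreeGroup X := FreeGroup.mk (D.seg 0 t)

/-- the root -/
def R : FreeGroup X := D.s D.L

/-- cyclic conjugates of the root -/
def r (t : ℕ) : FreeGroup X := D.s t * D.R * (D.s t)⁻¹

lemma s_zero : D.s 0 = 1 := rfl

lemma s_succ (t : ℕ) : D.s (t + 1) = ltr (D.y t) * D.s t := by
  rw [s, seg, mk_cons_ltr, zero_add, s]

lemma mk_seg_mul (a k : ℕ) : FreeGroup.mk (D.seg a k) * D.s a = D.s (a + k) := by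
  induction k with
  | zero => exact one_mul _
  | succ k ih => rw [seg, mk_cons_ltr, mul_assoc, ih, ← add_assoc, s_succ]

lemma s_add_L (t : ℕ) : D.s (t + D.L) = D.s t * D.R := by
  induction t with
  | zero => rw [zero_add, s_zero, one_mul, R]
  | succ t ih => rw [add_right_comm, s_succ, ih, D.per, s_succ, mul_assoc]

lemma s_add_mul (t k : ℕ) : D.s (t + k * D.L) = D.s t * D.R ^ k := by
  induction k with
  | zero => simp
  | succ k ih => rw [Nat.succ_mul, ← add_assoc, s_add_L, ih, pow_succ, mul_assoc]

lemma s_mul (k : ℕ) : D.s (k * D.L) = D.R ^ k := by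
  have := D.s_add_mul 0 k
  rwa [zero_add, s_zero, one_mul] at this

lemma y_add_mul (t k : ℕ) : D.y (t + k * D.L) = D.y t := by
  induction k with
  | zero => simp
  | succ k ih => rw [Nat.succ_mul, ← add_assoc, D.per, ih]

lemma r_zero : D.r 0 = D.R := by simp [r, s_zero]

lemma r_succ (t : ℕ) : D.r (t + 1) = ltr (D.y t) * D.r t * (ltr (D.y t))⁻¹ := by
  rw [r, s_succ, r]; group

lemma r_add_mul (t k : ℕ) : D.r (t + k * D.L) = D.r t := by
  rw [r, s_add_mul, r, mul_inv_rev]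
  have h : D.R ^ k * D.R * (D.R ^ k)⁻¹ = D.R := by
    rw [← pow_succ, pow_succ', mul_inv_cancel_right]
  calc D.s t * D.R ^ k * D.R * ((D.R ^ k)⁻¹ * (D.s t)⁻¹)
      = D.s t * (D.R ^ k * D.R * (D.R ^ k)⁻¹) * (D.s t)⁻¹ := by simp only [mul_assoc]
    _ = _ := by rw [h]

lemma r_mod (t : ℕ) : D.r (t % D.L) = D.r t := by
  conv_rhs => rw [← Nat.mod_add_div t D.L, mul_comm, r_add_mul]

/-- index of the source of the edge of step `t` -/
def srcIdx (t : ℕ) : ℕ := cond (D.y t).2 t (t + 1)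

/-- index of the target of the edge of step `t` -/
def tgtIdx (t : ℕ) : ℕ := cond (D.y t).2 (t + 1) t

lemma s_tgtIdx (t : ℕ) : D.s (D.tgtIdx t) = FreeGroup.of (D.y t).1 * D.s (D.srcIdx t) := by
  rw [tgtIdx, srcIdx]
  have := ltr_eq (D.y t)
  cases h : (D.y t).2
  · simp only [cond_false, s_succ]
    rw [this, h]; simp
  · simp only [cond_true, s_succ]
    rw [this, h]; simp

lemma r_tgtIdx (t : ℕ) : D.r (D.tgtIdx t) =
    FreeGroup.of (D.y t).1 * D.r (D.srcIdx t) * (FreeGroup.of (D.y t).1)⁻¹ := by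
  rw [r, s_tgtIdx, r]; group

section Action
variable {Ω : Type} [MulAction (FreeGroup X) Ω]

/-- the edge of step `t` of the relator path at `v` -/
def edge (v : Ω) (t : ℕ) : Ω × X := edgeOf (D.y t) (D.s t • v)

lemma edge_eq (v : Ω) (t : ℕ) : D.edge v t = (D.s (D.srcIdx t) • v, (D.y t).1) := by
  rw [edge, edgeOf, srcIdx]
  cases h : (D.y t).2
  · simp only [cond_false, s_succ, smul_smul]
  · simp only [cond_true]

lemma edge_add_mul (v : Ω) (t k : ℕ) : D.edge v (t + k * D.L) = D.edge (D.R ^ k • v) t := by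
  rw [edge, s_add_mul, y_add_mul, edge, smul_smul]

lemma mem_wordEdges_seg (v : Ω) (a k : ℕ) (e : Ω × X) :
    e ∈ wordEdges (D.seg a k) (D.s a • v) ↔ ∃ j < k, D.edge v (a + j) = e := by
  induction k with
  | zero => simp [seg, wordEdges]
  | succ k ih =>
    rw [seg, wordEdges, List.mem_cons, ih, smul_smul, mk_seg_mul]
    constructor
    · rintro (h | ⟨j, hj, h⟩)
      · exact ⟨k, Nat.lt_succ_self k, h.symm⟩
      · exact ⟨j, Nat.lt_succ_of_lt hj, h⟩
    · rintro ⟨j, hj, h⟩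
      rcases Nat.lt_succ_iff_lt_or_eq.1 hj with h' | rfl
      · exact Or.inr ⟨j, h', h⟩
      · exact Or.inl h.symm

lemma mem_wordEdges_seg_zero (v : Ω) (k : ℕ) (e : Ω × X) :
    e ∈ wordEdges (D.seg 0 k) v ↔ ∃ j < k, D.edge v j = e := by
  have := D.mem_wordEdges_seg v 0 k e
  simpa [s_zero] using this

end Action

lemma seg_eq (a b k : ℕ) (h : D.seg a k = D.seg b k) (i : ℕ) (hi : i < k) :
    D.y (a + i) = D.y (b + i) := by
  induction k with
  | zero => omega
  | succ k ih =>
    simp only [seg, List.cons.injEq] at h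
    rcases Nat.lt_succ_iff_lt_or_eq.1 hi with h' | rfl
    · exact ih h.2 h'
    · exact h.1

lemma seg_reduced (a k : ℕ) : FreeGroup.IsReduced (D.seg a k) := by
  unfold FreeGroup.IsReduced
  induction k with
  | zero => simp [seg]
  | succ k ih =>
    cases k with
    | zero => simp [seg]
    | succ k =>
      simp only [seg] at ih ⊢
      rw [List.isChain_cons_cons]
      refine ⟨?_, ih⟩
      intro h
      have := D.red (a + k)
      rw [add_assoc] at this
      by_contra hne
      apply this
      refine Prod.ext h ?_
      exact (Bool.eq_not_of_ne hne)

lemma r_eq_mk (a : ℕ) : D.r a = FreeGroup.mk (D.seg a D.L) := by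
  rw [r, ← s_add_L, ← mk_seg_mul, mul_inv_cancel_right]

lemma R_eq_pow (g k : ℕ) (hg : ∀ t, D.y (t + g) = D.y t) (hk : D.L = k * g) :
    D.R = D.s g ^ k := by
  have h1 : ∀ t, D.s (t + g) = D.s t * D.s g := by
    intro t
    induction t with
    | zero => rw [zero_add, s_zero, one_mul]
    | succ t ih => rw [add_right_comm, s_succ, ih, hg, s_succ, mul_assoc]
  have h2 : ∀ k, D.s (k * g) = D.s g ^ k := by
    intro k
    induction k with
    | zero => simp [s_zero]
    | succ k ih => rw [Nat.succ_mul, h1, ih, pow_succ]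
  rw [R, hk, h2]

lemma r_distinct (hR : ∀ (S : FreeGroup X) (k : ℕ), 1 ≤ k → D.R = S ^ k → k = 1)
    (a b : ℕ) (hab : a < b) (hb : b < D.L) : D.r a ≠ D.r b := by
  classical
  intro h
  rw [r_eq_mk, r_eq_mk] at h
  have h1 : D.seg a D.L = D.seg b D.L := by
    have := congrArg FreeGroup.toWord h
    rwa [FreeGroup.toWord_mk, FreeGroup.toWord_mk, (D.seg_reduced _ _).reduce_eq,
      (D.seg_reduced _ _).reduce_eq] at this
  have h2 := D.seg_eq a b D.L h1
  have hmod : ∀ t, D.y (t % D.L) = D.y t := by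
    intro t
    conv_rhs => rw [← Nat.mod_add_div t D.L, mul_comm, y_add_mul]
  have h3 : ∀ i, D.y (a + i) = D.y (b + i) := by
    intro i
    have := h2 (i % D.L) (Nat.mod_lt _ D.hL)
    rw [← hmod (a + i), ← hmod (b + i), Nat.add_mod a, Nat.add_mod b]
    rw [← hmod (a + i % D.L), ← hmod (b + i % D.L), Nat.add_mod a, Nat.add_mod b] at this
    simpa using this
  let d := b - a
  have hd : ∀ t, D.y (t + d) = D.y t := by
    intro t
    have := h3 (t + (a * D.L - a))
    have hle : a ≤ a * D.L := Nat.le_mul_of_pos_right a D.hL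
    rw [show a + (t + (a * D.L - a)) = t + a * D.L by omega,
      show b + (t + (a * D.L - a)) = (t + d) + a * D.L by omega, y_add_mul, y_add_mul] at this
    exact this.symm
  have hdm : ∀ t m, D.y (t + d * m) = D.y t := by
    intro t m
    induction m with
    | zero => simp
    | succ m ih => rw [Nat.mul_succ, ← add_assoc, hd, ih]
  have hgl : Nat.gcd d D.L ≤ d := Nat.gcd_le_left _ (by omega)
  obtain ⟨m, -, hm⟩ := Nat.exists_mul_mod_eq_gcd (k := D.L) (n := d) (by omega)
  have hg : ∀ t, D.y (t + Nat.gcd d D.L) = D.y t := by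
    intro t
    rw [← hm, ← hmod, Nat.add_mod_mod, hmod, hdm]
  obtain ⟨k, hk⟩ := Nat.gcd_dvd_right d D.L
  have hk1 : 1 ≤ k := by
    rcases Nat.eq_zero_or_pos k with rfl | h
    · have := D.hL; omega
    · exact h
  have := hR _ k hk1 (D.R_eq_pow _ k hg (by rw [mul_comm]; exact hk))
  rw [this, mul_one] at hk
  omega

/-- rotation -/
def rot (a : ℕ) : CycData X where
  y t := D.y (a + t)
  L := D.L
  hL := D.hL
  per t := by rw [← add_assoc, D.per]
  red t := by rw [← add_assoc]; exact D.red _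

lemma rot_seg (a b k : ℕ) : (D.rot a).seg b k = D.seg (a + b) k := by
  induction k with
  | zero => rfl
  | succ k ih => rw [seg, ih, seg]; simp [rot, add_assoc]

lemma rot_r (a t : ℕ) : (D.rot a).r t = D.r (a + t) := by
  rw [r_eq_mk, rot_seg, r_eq_mk]; rfl

end CycData

theorem exists_cycData {X : Type} [LinearOrder (FreeGroup X)] (R : FreeGroup X)
    (hR : ∀ (S : FreeGroup X) (k : ℕ), 1 ≤ k → R = S ^ k → k = 1) :
    ∃ D : CycData X, (∀ t, D.r 0 ≤ D.r t) ∧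
      (∀ a b, a < D.L → b < D.L → D.r a = D.r b → a = b) ∧ ∃ c, D.R = c * R * c⁻¹ := by
  classical
  let w := FreeGroup.reduceCyclically R.toWord
  have hw : FreeGroup.IsCyclicallyReduced w :=
    FreeGroup.reduceCyclically.isCyclicallyReduced FreeGroup.isReduced_toWord
  have hcw := FreeGroup.reduceCyclically.conj_conjugator_reduceCyclically R.toWord
  have hmk : ∃ c, FreeGroup.mk w = c * R * c⁻¹ := by
    refine ⟨(FreeGroup.mk (FreeGroup.reduceCyclically.conjugator R.toWord))⁻¹, ?_⟩
    have h1 := congrArg FreeGroup.mk hcw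
    rw [← FreeGroup.mul_mk, ← FreeGroup.mul_mk, ← FreeGroup.inv_mk, FreeGroup.mk_toWord] at h1
    generalize FreeGroup.mk (FreeGroup.reduceCyclically.conjugator R.toWord) = u at h1 ⊢
    change u * FreeGroup.mk w * u⁻¹ = R at h1
    rw [← h1]; group
  have hne : w ≠ [] := by
    intro h0
    rw [h0] at hmk
    obtain ⟨c, hc⟩ := hmk
    have h1 : (1 : FreeGroup X) = c * R * c⁻¹ := hc
    have h2 : R = 1 := by
      have : R = c⁻¹ * (c * R * c⁻¹) * c := by group
      rw [this, ← h1]; group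
    have := hR 1 2 (by norm_num) (by rw [h2]; simp)
    omega
  have hLpos : 0 < w.length := List.length_pos_iff.2 hne
  -- letters, rightmost first
  let y : ℕ → X × Bool := fun t => w.reverse[t % w.length]'(by
    rw [List.length_reverse]; exact Nat.mod_lt _ hLpos)
  have hred : ∀ t, y (t + 1) ≠ ((y t).1, !(y t).2) := by
    intro t ht
    obtain ⟨hw1, hw2⟩ := FreeGroup.isCyclicallyReduced_iff.1 hw
    have hget : ∀ t i (hi : i < w.length), t % w.length = w.length - 1 - i → y t = w[i] := by
      intro t i hi h
      simp only [y]
      rw [List.getElem_reverse]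
      congr 1
      omega
    have hlt := Nat.mod_lt t hLpos
    by_cases hcase : t % w.length + 1 < w.length
    · have h1 := hget t (w.length - 1 - t % w.length) (by omega) (by omega)
      have h2 := hget (t + 1) (w.length - 2 - t % w.length) (by omega) (by
        rw [Nat.add_mod, Nat.mod_eq_of_lt (a := 1) (by omega), Nat.mod_eq_of_lt hcase]
        omega)
      unfold FreeGroup.IsReduced at hw1
      rw [List.isChain_iff_getElem] at hw1
      have h3 := hw1 (w.length - 2 - t % w.length) (by omega)
      have h4 : w[w.length - 2 - t % w.length + 1] = y t := by
        rw [h1]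
        congr 1
        omega
      rw [h4, ← h2, ht] at h3
      simp at h3
    · have h1 := hget t 0 hLpos (by omega)
      have h2 := hget (t + 1) (w.length - 1) (by omega) (by
        rw [← Nat.mod_add_mod, show t % w.length + 1 = w.length by omega, Nat.mod_self]
        omega)
      have h3 := hw2 (y (t + 1)) (by
        rw [h2, List.getLast?_eq_getElem?]; simp) (y t) (by
        rw [h1, List.head?_eq_getElem?]; simp)
      rw [ht] at h3
      simp at h3
  let D0 : CycData X := ⟨y, w.length, hLpos, by intro t; simp [y], hred⟩
  have hseg : ∀ k, k ≤ w.length → D0.seg 0 k = w.drop (w.length - k) := by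
    intro k
    induction k with
    | zero => intro _; simp [CycData.seg]
    | succ k ih =>
      intro hk
      rw [CycData.seg, ih (by omega)]
      have h1 : w.drop (w.length - (k + 1)) = w[w.length - (k + 1)] :: w.drop (w.length - (k + 1) + 1) :=
        List.drop_eq_getElem_cons (by omega)
      rw [h1, show w.length - (k + 1) + 1 = w.length - k by omega]
      congr 1
      simp only [D0, y, zero_add]
      rw [List.getElem_reverse]
      congr 1
      rw [Nat.mod_eq_of_lt (by omega)]
      omega
  have hR0 : D0.R = FreeGroup.mk w := by
    rw [CycData.R, CycData.s, hseg D0.L le_rfl]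
    simp [D0]
  obtain ⟨c, hc⟩ := hmk
  have hRD : ∀ (S : FreeGroup X) (k : ℕ), 1 ≤ k → D0.R = S ^ k → k = 1 := by
    intro S k hk h
    apply hR (c⁻¹ * S * c) k hk
    have : (c⁻¹ * S * c) ^ k = c⁻¹ * S ^ k * c := by
      have := conj_pow (a := c⁻¹) (b := S) (i := k)
      rwa [inv_inv] at this
    rw [this, ← h, hR0, hc]; group
  obtain ⟨a, ha, hamin⟩ := Finset.exists_min_image (Finset.range D0.L) D0.r
    ⟨0, Finset.mem_range.2 D0.hL⟩
  refine ⟨D0.rot a, ?_, ?_, ?_⟩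
  · intro t
    rw [CycData.rot_r, CycData.rot_r, add_zero, ← D0.r_mod (a + t)]
    exact hamin _ (Finset.mem_range.2 (Nat.mod_lt _ D0.hL))
  · have hdist : ∀ a b, a < D0.L → b < D0.L → D0.r a = D0.r b → a = b := by
      intro a b ha hb hab
      rcases lt_trichotomy a b with h | h | h
      · exact absurd hab (D0.r_distinct hRD a b h hb)
      · exact h
      · exact absurd hab.symm (D0.r_distinct hRD b a h ha)
    intro i j hi hj hij
    rw [CycData.rot_r, CycData.rot_r, ← D0.r_mod (a + i), ← D0.r_mod (a + j)] at hij
    have h1 := hdist _ _ (Nat.mod_lt _ D0.hL) (Nat.mod_lt _ D0.hL) hij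
    have h2 : i ≡ j [MOD D0.L] := Nat.ModEq.add_left_cancel' a h1
    have hi' : i < D0.L := hi
    have hj' : j < D0.L := hj
    exact Nat.ModEq.eq_of_lt_of_lt h2 hi' hj'
  · refine ⟨D0.s a * c, ?_⟩
    rw [← CycData.r_zero, CycData.rot_r, add_zero, CycData.r, hR0, hc]
    group


/-! ### Alive cells and collapsing -/

namespace CycData
variable {X : Type} (D : CycData X) {Ω : Type} [MulAction (FreeGroup X) Ω] (n : ℕ)

/-- the relator path at `v` is closed and runs inside `E` -/
def Alive (E : Set (Ω × X)) (v : Ω) : Prop := D.R ^ n • v = v ∧ ∀ t, D.edge v t ∈ E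

/-- cochains on `E` killing the alive cells extend to cochains killing all the base cells -/
def CInv (B : Set Ω) (E : Set (Ω × X)) : Prop :=
  ∀ (K : Type) [Group K] (φ : Ω × X → K),
    (∀ v, D.Alive n E v → pathVal φ (D.R ^ n) v = 1) →
    ∃ φ' : Ω × X → K, (∀ e ∈ E, φ' e = φ e) ∧ ∀ v ∈ B, pathVal φ' (D.R ^ n) v = 1

variable {D n}

lemma Alive.pow {E : Set (Ω × X)} {v : Ω} (h : D.Alive n E v) (k : ℕ) :
    D.Alive n E (D.R ^ k • v) := by
  refine ⟨?_, fun t => ?_⟩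
  · rw [smul_smul, ← pow_add, add_comm, pow_add, mul_smul, h.1]
  · rw [← edge_add_mul]; exact h.2 _

lemma pathVal_R_shift {K : Type} [Group K] (φ : Ω × X → K) (v : Ω) (k : ℕ)
    (h : D.R ^ n • v = v) (h1 : pathVal φ (D.R ^ n) (D.R ^ k • v) = 1) :
    pathVal φ (D.R ^ n) v = 1 := by
  have e1 := pathVal_mul φ (D.R ^ n) (D.R ^ k) v
  have e2 := pathVal_mul φ (D.R ^ k) (D.R ^ n) v
  rw [← pow_add, h1, one_mul] at e1
  rw [← pow_add, h, add_comm, e1] at e2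
  exact (mul_eq_left.1 e2.symm)

lemma R_pow_eq_mk (k : ℕ) : D.R ^ k = FreeGroup.mk (D.seg 0 (k * D.L)) := by
  rw [← s_mul, s]

lemma pathVal_R_congr {K : Type} [Group K] (φ φ' : Ω × X → K) (v : Ω) (k : ℕ)
    (h : ∀ t < k * D.L, φ (D.edge v t) = φ' (D.edge v t)) :
    pathVal φ (D.R ^ k) v = pathVal φ' (D.R ^ k) v := by
  rw [R_pow_eq_mk]
  apply pathVal_congr
  intro e he
  rw [mem_wordEdges_seg_zero] at he
  obtain ⟨j, hj, rfl⟩ := he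
  exact h j hj

lemma edge_decomp (v : Ω) (t : ℕ) :
    D.edge v t = D.edge (D.R ^ (t / D.L) • v) (t % D.L) := by
  rw [← edge_add_mul, mul_comm, Nat.mod_add_div]

theorem collapse (hn : 0 < n) {B : Set Ω} {E : Set (Ω × X)} (hE : D.CInv n B E) (v : Ω) (i : ℕ)
    (hv : D.Alive n E v) (hi : i < D.L)
    (huniq : ∀ v' i', D.Alive n E v' → i' < D.L → D.edge v' i' = D.edge v i → v' = v ∧ i' = i) :
    D.CInv n B (E \ {D.edge v i}) := by
  classical
  intro K _ φ hφ
  let d := Function.minimalPeriod (D.R • · : Ω → Ω) v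
  have hper : ∀ k, Function.IsPeriodicPt (D.R • · : Ω → Ω) k v ↔ D.R ^ k • v = v := by
    intro k
    rw [Function.IsPeriodicPt, Function.IsFixedPt, smul_iterate]
  have hdvd : d ∣ n := ((hper n).2 hv.1).minimalPeriod_dvd
  have hdpos : 0 < d := Nat.pos_of_dvd_of_pos hdvd hn
  have hd : D.R ^ d • v = v := (hper d).1 (Function.isPeriodicPt_minimalPeriod _ _)
  have hdmin : ∀ k < d, D.R ^ k • v = v → k = 0 := by
    intro k hk hkv
    by_contra hk0
    exact absurd (((hper k).2 hkv).minimalPeriod_le (Nat.pos_of_ne_zero hk0)) (by omega)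
  -- passage times of the distinguished edge
  have hpass : ∀ t < d * D.L, D.edge v t = D.edge v i → t = i := by
    intro t ht h
    rw [edge_decomp] at h
    obtain ⟨h1, h2⟩ := huniq _ _ (hv.pow _) (Nat.mod_lt _ D.hL) h
    have h3 := hdmin _ (Nat.div_lt_of_lt_mul (by rwa [mul_comm])) h1
    have := Nat.mod_add_div t D.L
    rw [h3, h2] at this
    omega
  have hidL : i < d * D.L := lt_of_lt_of_le hi (Nat.le_mul_of_pos_left _ hdpos)
  let A : K := pathVal φ (FreeGroup.mk (D.seg (i + 1) (d * D.L - (i + 1)))) (D.s (i + 1) • v)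
  let Bv : K := pathVal φ (D.s i) v
  let κ : K := cond (D.y i).2 (A⁻¹ * Bv⁻¹) (A⁻¹ * Bv⁻¹)⁻¹
  let φ' : Ω × X → K := Function.update φ (D.edge v i) κ
  have hφ' : ∀ e, e ≠ D.edge v i → φ' e = φ e := fun e he => Function.update_of_ne he _ _
  have hRd : pathVal φ' (D.R ^ d) v = 1 := by
    have e1 : D.R ^ d =
        FreeGroup.mk (D.seg (i + 1) (d * D.L - (i + 1))) * (ltr (D.y i) * D.s i) := by
      rw [← s_succ, mk_seg_mul, ← s_mul]
      congr 1
      omega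
    rw [e1, pathVal_mul, pathVal_mul, ← s_succ]
    have e2 : pathVal φ' (FreeGroup.mk (D.seg (i + 1) (d * D.L - (i + 1)))) (D.s (i + 1) • v) =
        A := by
      apply pathVal_congr
      intro e he
      rw [mem_wordEdges_seg] at he
      obtain ⟨j, hj, rfl⟩ := he
      apply hφ'
      intro h
      have := hpass _ (by omega) h
      omega
    have e3 : pathVal φ' (D.s i) v = Bv := by
      apply pathVal_congr
      intro e he
      rw [mem_wordEdges_seg_zero] at he
      obtain ⟨j, hj, rfl⟩ := he
      apply hφ'
      intro h
      have := hpass _ (by omega) h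
      omega
    have e4 : pathVal φ' (ltr (D.y i)) (D.s i • v) = A⁻¹ * Bv⁻¹ := by
      rw [pathVal_ltr]
      have : φ' (edgeOf (D.y i) (D.s i • v)) = κ := Function.update_self _ _ _
      rw [this]
      simp only [κ]
      cases (D.y i).2 <;> simp
    rw [e2, e3, e4]
    group
  have hRn : pathVal φ' (D.R ^ n) v = 1 := by
    obtain ⟨m, hm⟩ := hdvd
    rw [hm, pow_mul, pathVal_pow_period _ _ _ hd, hRd, one_pow]
  obtain ⟨ψ, hψ1, hψ2⟩ := hE K φ' (by
    intro v' hv'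
    by_cases hex : ∃ t, D.edge v' t = D.edge v i
    · obtain ⟨t, ht⟩ := hex
      rw [edge_decomp] at ht
      obtain ⟨h1, h2⟩ := huniq _ _ (hv'.pow _) (Nat.mod_lt _ D.hL) ht
      apply pathVal_R_shift φ' v' (t / D.L) hv'.1
      rw [h1, hRn]
    · push Not at hex
      rw [pathVal_R_congr φ' φ v' n (fun t _ => hφ' _ (hex t))]
      exact hφ v' ⟨hv'.1, fun t => ⟨hv'.2 t, hex t⟩⟩)
  refine ⟨ψ, ?_, hψ2⟩
  rintro e ⟨he, hne⟩
  rw [hψ1 e he]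
  exact hφ' e hne

variable (D n)

lemma cinv_initial (B : Set Ω) (E : Set (Ω × X)) (hB : ∀ v ∈ B, D.R ^ n • v = v) (hn : 0 < n)
    (hE : ∀ v ∈ B, ∀ t < n * D.L, D.edge v t ∈ E) : D.CInv n B E := by
  intro K _ φ hφ
  refine ⟨φ, fun _ _ => rfl, fun v hv => hφ v ⟨hB v hv, fun t => ?_⟩⟩
  have h1 : ∀ k, D.R ^ (k * n) • v = v := by
    intro k
    induction k with
    | zero => simp
    | succ k ih => rw [Nat.succ_mul, pow_add, mul_smul, hB v hv, ih]
  have h2 : D.edge v t = D.edge v (t % (n * D.L)) := by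
    conv_lhs => rw [← Nat.mod_add_div t (n * D.L),
      show n * D.L * (t / (n * D.L)) = (t / (n * D.L) * n) * D.L by ring, edge_add_mul, h1]
  rw [h2]
  exact hE v hv _ (Nat.mod_lt _ (Nat.mul_pos hn D.hL))

/-- a minimal set of edges -/
theorem exists_minimal (hn : 0 < n) (B : Set Ω) (hBf : B.Finite) (hB : ∀ v ∈ B, D.R ^ n • v = v)
    (El : Finset (Ω × X)) :
    ∃ E : Finset (Ω × X), El ⊆ E ∧ D.CInv n B (E : Set (Ω × X)) ∧
      ∀ v i, D.Alive n (E : Set (Ω × X)) v → i < D.L →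
        (∀ v' i', D.Alive n (E : Set (Ω × X)) v' → i' < D.L →
          D.edge v' i' = D.edge v i → v' = v ∧ i' = i) → D.edge v i ∈ El := by
  classical
  let Good : Finset (Ω × X) → Prop := fun E => El ⊆ E ∧ D.CInv n B (E : Set (Ω × X))
  have hex : ∃ m, ∃ E, Good E ∧ E.card = m := by
    let E0 : Finset (Ω × X) := El ∪
      (hBf.toFinset ×ˢ Finset.range (n * D.L)).image (fun a => D.edge a.1 a.2)
    refine ⟨_, E0, ⟨Finset.subset_union_left, ?_⟩, rfl⟩
    apply D.cinv_initial n B _ hB hn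
    intro v hv t ht
    rw [Finset.mem_coe]
    apply Finset.mem_union_right
    exact Finset.mem_image.2 ⟨(v, t), by simp [hv, ht], rfl⟩
  obtain ⟨E, ⟨hE1, hE2⟩, hE3⟩ := Nat.find_spec hex
  refine ⟨E, hE1, hE2, ?_⟩
  intro v i hv hi huniq
  by_contra hnot
  have hlt : (E.erase (D.edge v i)).card < Nat.find hex := by
    rw [← hE3]
    exact Finset.card_erase_lt_of_mem (by simpa using hv.2 i)
  apply Nat.find_min hex hlt
  refine ⟨E.erase (D.edge v i), ⟨?_, ?_⟩, rfl⟩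
  · intro e he
    rw [Finset.mem_erase]
    exact ⟨by rintro rfl; exact hnot he, hE1 he⟩
  · rw [Finset.coe_erase]
    exact collapse hn hE2 v i hv hi huniq

end CycData


/-! ### Counting with the bi-order -/

namespace CycData
section Order
variable {X : Type} (D : CycData X) {Ω : Type} [MulAction (FreeGroup X) Ω] (P : Finset Ω)
  [LinearOrder (FreeGroup X)]

/-- `(v, t)` has maximal key at its vertex -/
def VTop (v : Ω) (t : ℕ) : Prop := ∀ v' ∈ P, ∀ t', D.s t' • v' = D.s t • v → D.r t' ≤ D.r t

/-- `(v, t)` has maximal key at its edge -/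
def PTop (v : Ω) (t : ℕ) : Prop :=
  ∀ v' ∈ P, ∀ t', D.edge v' t' = D.edge v t → D.r (D.srcIdx t') ≤ D.r (D.srcIdx t)

variable {D P}

lemma edge_src {v v' : Ω} {t t' : ℕ} (h : D.edge v' t' = D.edge v t) :
    D.s (D.srcIdx t') • v' = D.s (D.srcIdx t) • v ∧ (D.y t').1 = (D.y t).1 := by
  rw [edge_eq, edge_eq] at h
  exact Prod.ext_iff.1 h

lemma edge_tgt {v v' : Ω} {t t' : ℕ} (h : D.edge v' t' = D.edge v t) :
    D.s (D.tgtIdx t') • v' = D.s (D.tgtIdx t) • v := by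
  obtain ⟨h1, h2⟩ := edge_src h
  rw [s_tgtIdx, s_tgtIdx, mul_smul, mul_smul, h1, h2]

variable (hconj : ∀ c a b : FreeGroup X, a < b → c * a * c⁻¹ < c * b * c⁻¹)
include hconj

lemma conj_le_iff (c a b : FreeGroup X) : c * a * c⁻¹ ≤ c * b * c⁻¹ ↔ a ≤ b := by
  constructor
  · intro h
    by_contra hlt
    exact absurd (hconj c _ _ (not_le.1 hlt)) (not_lt.2 h)
  · intro h
    rcases h.lt_or_eq with h | h
    · exact (hconj c _ _ h).le
    · rw [h]

lemma tgt_le_iff {t t' : ℕ} (h : (D.y t').1 = (D.y t).1) :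
    D.r (D.tgtIdx t') ≤ D.r (D.tgtIdx t) ↔ D.r (D.srcIdx t') ≤ D.r (D.srcIdx t) := by
  rw [r_tgtIdx, r_tgtIdx, h, conj_le_iff hconj]

lemma ptop_of_vtop_src {v : Ω} {t : ℕ} (h : D.VTop P v (D.srcIdx t)) : D.PTop P v t := by
  intro v' hv' t' he
  exact h v' hv' _ (edge_src he).1

lemma ptop_of_vtop_tgt {v : Ω} {t : ℕ} (h : D.VTop P v (D.tgtIdx t)) : D.PTop P v t := by
  intro v' hv' t' he
  rw [← tgt_le_iff hconj (edge_src he).2]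
  exact h v' hv' _ (edge_tgt he)

lemma ptop_of_vtop {v : Ω} {t : ℕ} (h : D.VTop P v t) : D.PTop P v t := by
  cases hb : (D.y t).2
  · exact ptop_of_vtop_tgt hconj (by simpa [tgtIdx, hb] using h)
  · exact ptop_of_vtop_src hconj (by simpa [srcIdx, hb] using h)

lemma ptop_of_vtop_succ {v : Ω} {t : ℕ} (h : D.VTop P v (t + 1)) : D.PTop P v t := by
  cases hb : (D.y t).2
  · exact ptop_of_vtop_src hconj (by simpa [srcIdx, hb] using h)
  · exact ptop_of_vtop_tgt hconj (by simpa [tgtIdx, hb] using h)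

omit hconj

variable (hdist : ∀ a b, a < D.L → b < D.L → D.r a = D.r b → a = b)
include hdist

lemma mod_eq_of_r_eq {a b : ℕ} (h : D.r a = D.r b) : a % D.L = b % D.L := by
  apply hdist _ _ (Nat.mod_lt _ D.hL) (Nat.mod_lt _ D.hL)
  rw [r_mod, r_mod, h]

lemma flag_eq {v v' : Ω} {t t' : ℕ} (ht : t < D.L) (ht' : t' < D.L)
    (he : D.edge v' t' = D.edge v t) (hr : D.r (D.srcIdx t') = D.r (D.srcIdx t)) :
    v' = v ∧ t' = t := by
  obtain ⟨h1, h2⟩ := edge_src he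
  have hmod := mod_eq_of_r_eq hdist hr
  have hymod : ∀ t, D.y (t % D.L) = D.y t := by
    intro t
    conv_rhs => rw [← Nat.mod_add_div t D.L, mul_comm, y_add_mul]
  have htt : t' = t := by
    rw [srcIdx, srcIdx] at hmod
    cases hb : (D.y t).2 <;> cases hb' : (D.y t').2
    · rw [hb, hb'] at hmod
      simp only [cond_false] at hmod
      have : t' ≡ t [MOD D.L] := Nat.ModEq.add_right_cancel' 1 hmod
      exact Nat.ModEq.eq_of_lt_of_lt this ht' ht
    · exfalso
      rw [hb, hb'] at hmod
      simp only [cond_false, cond_true] at hmod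
      apply D.red t
      rw [← hymod (t + 1), ← hmod, hymod]
      exact Prod.ext h2 (by rw [hb, hb']; rfl)
    · exfalso
      rw [hb, hb'] at hmod
      simp only [cond_false, cond_true] at hmod
      apply D.red t'
      rw [← hymod (t' + 1), hmod, hymod]
      exact Prod.ext h2.symm (by rw [hb, hb']; rfl)
    · rw [hb, hb'] at hmod
      simp only [cond_true] at hmod
      exact Nat.ModEq.eq_of_lt_of_lt hmod ht' ht
  refine ⟨?_, htt⟩
  rw [htt] at h1
  exact MulAction.injective _ h1

include hconj

theorem free_of_ptop_zero (hmin : ∀ t, D.r 0 ≤ D.r t) {v : Ω} (h : D.PTop P v 0)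
    {v' : Ω} {t' : ℕ} (hv' : v' ∈ P) (ht' : t' < D.L) (he : D.edge v' t' = D.edge v 0) :
    v' = v ∧ t' = 0 := by
  apply flag_eq hdist D.hL ht' he
  have h1 := h v' hv' t' he
  cases hb : (D.y 0).2
  · have h2 := (tgt_le_iff hconj (edge_src he).2).2 h1
    have h0 : D.tgtIdx 0 = 0 := by simp [tgtIdx, hb]
    have h3 : D.r (D.tgtIdx 0) ≤ D.r (D.tgtIdx t') := by rw [h0]; exact hmin _
    have h4 := (tgt_le_iff hconj (edge_src he).2.symm).1 h3
    exact le_antisymm h1 h4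
  · have h0 : D.srcIdx 0 = 0 := by simp [srcIdx, hb]
    refine le_antisymm h1 ?_
    rw [h0]; exact hmin _

open Classical in
theorem order_count (hP : ∀ v ∈ P, ∀ k : ℕ, D.R ^ k • v ∈ P) :
    ((P ×ˢ Finset.range D.L).image (fun a => D.s a.2 • a.1)).card +
      (P.filter (fun v => ¬ D.PTop P v 0)).card ≤
    ((P ×ˢ Finset.range D.L).image (fun a => D.edge a.1 a.2)).card := by
  let Fl := P ×ˢ Finset.range D.L
  let VT := Fl.filter (fun a => D.VTop P a.1 a.2)
  let PT := Fl.filter (fun a => D.PTop P a.1 a.2)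
  have hmodlt : ∀ t, t % D.L < D.L := fun t => Nat.mod_lt _ D.hL
  have sdec : ∀ (v : Ω) t, D.s t • v = D.s (t % D.L) • D.R ^ (t / D.L) • v := by
    intro v t
    rw [smul_smul, ← s_add_mul, mul_comm (t / D.L), Nat.mod_add_div]
  have hV : (Fl.image (fun a => D.s a.2 • a.1)).card ≤ VT.card := by
    have hsub : Fl.image (fun a => D.s a.2 • a.1) ⊆ VT.image (fun a => D.s a.2 • a.1) := by
      intro u hu
      let Fu := Fl.filter (fun a => D.s a.2 • a.1 = u)
      have hne : Fu.Nonempty := by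
        obtain ⟨a, ha, hau⟩ := Finset.mem_image.1 hu
        exact ⟨a, Finset.mem_filter.2 ⟨ha, hau⟩⟩
      obtain ⟨a, ha, hmax⟩ := Finset.exists_max_image Fu (fun a => D.r a.2) hne
      obtain ⟨ha1, ha2⟩ := Finset.mem_filter.1 ha
      refine Finset.mem_image.2 ⟨a, Finset.mem_filter.2 ⟨ha1, ?_⟩, ha2⟩
      intro v' hv' t' h
      rw [ha2, sdec] at h
      rw [← D.r_mod t']
      apply hmax (D.R ^ (t' / D.L) • v', t' % D.L)
      refine Finset.mem_filter.2 ⟨Finset.mem_product.2 ⟨hP _ hv' _, ?_⟩, h⟩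
      exact Finset.mem_range.2 (hmodlt _)
    exact (Finset.card_le_card hsub).trans Finset.card_image_le
  have hE : PT.card ≤ (Fl.image (fun a => D.edge a.1 a.2)).card := by
    apply Finset.card_le_card_of_injOn (fun a => D.edge a.1 a.2)
    · intro a ha
      exact Finset.mem_coe.2 (Finset.mem_image_of_mem _ (Finset.mem_filter.1 ha).1)
    · intro a ha b hb hab
      obtain ⟨ha1, ha2⟩ := Finset.mem_filter.1 (Finset.mem_coe.1 ha)
      obtain ⟨hb1, hb2⟩ := Finset.mem_filter.1 (Finset.mem_coe.1 hb)
      rw [Finset.mem_product, Finset.mem_range] at ha1 hb1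
      have hab' : D.edge a.1 a.2 = D.edge b.1 b.2 := hab
      have := flag_eq hdist hb1.2 ha1.2 hab'
        (le_antisymm (hb2 _ ha1.1 _ hab') (ha2 _ hb1.1 _ hab'.symm))
      exact Prod.ext this.1 this.2
  have hVP : VT ⊆ PT := by
    intro a ha
    obtain ⟨ha1, ha2⟩ := Finset.mem_filter.1 ha
    exact Finset.mem_filter.2 ⟨ha1, ptop_of_vtop hconj ha2⟩
  obtain ⟨ts, hts, htsmax⟩ := Finset.exists_max_image (Finset.range D.L) D.r
    ⟨0, Finset.mem_range.2 D.hL⟩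
  rw [Finset.mem_range] at hts
  have htop : ∀ v, D.VTop P v ts := by
    intro v v' _ t' _
    rw [← D.r_mod t']
    exact htsmax _ (Finset.mem_range.2 (hmodlt _))
  have hex : ∀ v, ∃ t, D.PTop P v t := fun v => ⟨ts, ptop_of_vtop hconj (htop v)⟩
  have hNF : (P.filter (fun v => ¬ D.PTop P v 0)).card ≤ (PT \ VT).card := by
    apply Finset.card_le_card_of_injOn (fun v => (v, Nat.find (hex v)))
    · intro v hv
      obtain ⟨hv1, hv2⟩ := Finset.mem_filter.1 (Finset.mem_coe.1 hv)
      have hle : Nat.find (hex v) ≤ ts := Nat.find_min' (hex v) (ptop_of_vtop hconj (htop v))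
      have hmem : (v, Nat.find (hex v)) ∈ Fl :=
        Finset.mem_product.2 ⟨hv1, Finset.mem_range.2 (by omega)⟩
      rw [Finset.mem_coe, Finset.mem_sdiff]
      refine ⟨Finset.mem_filter.2 ⟨hmem, Nat.find_spec (hex v)⟩, ?_⟩
      intro hvt
      have hvt2 : D.VTop P v (Nat.find (hex v)) := (Finset.mem_filter.1 hvt).2
      have hpos : Nat.find (hex v) ≠ 0 := by
        intro h0
        have := Nat.find_spec (hex v)
        rw [h0] at this
        exact hv2 this
      obtain ⟨t, ht⟩ := Nat.exists_eq_succ_of_ne_zero hpos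
      rw [ht] at hvt2
      exact Nat.find_min (hex v) (by omega) (ptop_of_vtop_succ hconj hvt2)
    · intro a _ b _ hab
      exact (Prod.ext_iff.1 hab).1
  have hcard := Finset.card_sdiff_add_card_eq_card hVP
  change (Fl.image (fun a => D.s a.2 • a.1)).card + _ ≤ (Fl.image (fun a => D.edge a.1 a.2)).card
  omega

end Order
end CycData


/-! ### Homological counting -/

namespace CycData
variable {X : Type} {D : CycData X} {Ω : Type} [MulAction (FreeGroup X) Ω]

lemma orbit_halving (P : Finset Ω) (hP : ∀ v ∈ P, ∀ k : ℕ, D.R ^ k • v ∈ P) :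
    ∃ Q : Finset Ω, Q ⊆ P ∧ 2 * Q.card ≤ P.card ∧
      ∀ v ∈ P, D.R • v ≠ v → ∃ k : ℕ, D.R ^ k • v ∈ Q := by
  classical
  let p : ℕ → Prop := fun m => ∃ Q : Finset Ω, Q.card = m ∧ Q ⊆ P ∧ (∀ v ∈ Q, D.R • v ≠ v) ∧
      ∀ v ∈ P, D.R • v ≠ v → ∃ k : ℕ, D.R ^ k • v ∈ Q
  have hex : ∃ m, p m := ⟨_, P.filter (fun v => D.R • v ≠ v), rfl, Finset.filter_subset _ _,
    fun v hv => (Finset.mem_filter.1 hv).2,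
    fun v hv h => ⟨0, by simpa using ⟨hv, h⟩⟩⟩
  obtain ⟨Q, hc, hQP, hnf, hQ⟩ := Nat.find_spec hex
  refine ⟨Q, hQP, ?_, hQ⟩
  have key : ∀ v ∈ Q, D.R • v ∉ Q := by
    intro v hv hRv
    have hlt : (Q.erase v).card < Nat.find hex := by
      rw [← hc]; exact Finset.card_erase_lt_of_mem hv
    apply Nat.find_min hex hlt
    refine ⟨Q.erase v, rfl, (Finset.erase_subset _ _).trans hQP,
      fun w hw => hnf w (Finset.mem_of_mem_erase hw), ?_⟩
    intro w hw hwn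
    obtain ⟨k, hk⟩ := hQ w hw hwn
    by_cases hkv : D.R ^ k • w = v
    · refine ⟨k + 1, ?_⟩
      rw [pow_succ', mul_smul, hkv]
      exact Finset.mem_erase.2 ⟨hnf v hv, hRv⟩
    · exact ⟨k, Finset.mem_erase.2 ⟨hkv, hk⟩⟩
  have hdis : Disjoint Q (Q.image (D.R • ·)) := by
    rw [Finset.disjoint_left]
    intro a ha hb
    obtain ⟨c, hc, rfl⟩ := Finset.mem_image.1 hb
    exact key c hc ha
  have hci : (Q.image (D.R • ·)).card = Q.card :=
    Finset.card_image_of_injective _ (MulAction.injective D.R)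
  have := Finset.card_le_card (Finset.union_subset hQP (show Q.image (D.R • ·) ⊆ P by
    intro a ha
    obtain ⟨c, hc, rfl⟩ := Finset.mem_image.1 ha
    simpa using hP c (hQP hc) 1))
  rw [Finset.card_union_of_disjoint hdis, hci] at this
  omega

/-- extension of a cochain by `1` -/
noncomputable def extOne {A : Type} [One A] (Ec : Finset (Ω × X)) (φ : Ec → A) : Ω × X → A :=
  open Classical in fun e => if h : e ∈ Ec then φ ⟨e, h⟩ else 1

lemma extOne_mul {A : Type} [CommGroup A] (Ec : Finset (Ω × X)) (φ ψ : Ec → A) :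
    extOne Ec (φ * ψ) = extOne Ec φ * extOne Ec ψ := by
  funext e
  by_cases h : e ∈ Ec <;> simp [extOne, h]

lemma extOne_mem {A : Type} [One A] (Ec : Finset (Ω × X)) (φ : Ec → A) (e : Ec) :
    extOne Ec φ e = φ e := by
  simp [extOne]

open Classical in
theorem star_count {n q : ℕ} (hq : q.Prime) (hqn : q ∣ n) {B : Set Ω} {E : Finset (Ω × X)}
    (hE : D.CInv n B E) (p : Ω) (htr : ∀ ω : Ω, ∃ g : FreeGroup X, g • p = ω)
    (lh : List (X × Bool)) (hlE : ∀ e ∈ wordEdges lh p, e ∈ E)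
    (hSt : ∀ (K : Type) [Group K] (φ : Ω × X → K), pathVal φ (FreeGroup.mk lh) p = 1 →
      (∀ v ∈ B, pathVal φ (D.R ^ n) v = 1) → ∀ j : FreeGroup X, j • p = p → pathVal φ j p = 1)
    (P Q : Finset Ω) (hPA : ∀ v, v ∈ P ↔ D.Alive n E v)
    (hQ : ∀ v ∈ P, D.R • v ≠ v → ∃ k : ℕ, D.R ^ k • v ∈ Q) :
    ((P ×ˢ Finset.range D.L).image (fun a => D.edge a.1 a.2)).card ≤
      ((P ×ˢ Finset.range D.L).image (fun a => D.s a.2 • a.1)).card + Q.card + 1 := by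
  set Ec := (P ×ˢ Finset.range D.L).image (fun a => D.edge a.1 a.2) with hEc
  set Vc := (P ×ˢ Finset.range D.L).image (fun a => D.s a.2 • a.1) with hVc
  obtain ⟨A, _, hfin, hA⟩ : ∃ (A : Type) (_ : CommGroup A), Finite A ∧ Nat.card A = q := by
    haveI : NeZero q := ⟨hq.ne_zero⟩
    exact ⟨Multiplicative (ZMod q), inferInstance, inferInstanceAs (Finite (ZMod q)),
      Nat.card_zmod q⟩
  have hApow : ∀ a : A, a ^ n = 1 := by
    intro a
    obtain ⟨m, rfl⟩ := hqn
    have h1 : a ^ q = 1 := by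
      have h2 : a ^ Nat.card A = 1 := pow_card_eq_one'
      rwa [hA] at h2
    rw [pow_mul, h1, one_pow]
  have hP : ∀ v ∈ P, ∀ k : ℕ, D.R ^ k • v ∈ P := fun v hv k =>
    (hPA _).2 (((hPA v).1 hv).pow k)
  have hsV : ∀ v ∈ P, ∀ t, D.s t • v ∈ Vc := by
    intro v hv t
    rw [hVc, Finset.mem_image]
    refine ⟨(D.R ^ (t / D.L) • v, t % D.L), ?_, ?_⟩
    · simp only [Finset.mem_product, Finset.mem_range]
      exact ⟨hP v hv _, Nat.mod_lt _ D.hL⟩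
    · simp only [smul_smul]
      rw [← s_add_mul, mul_comm, Nat.mod_add_div]
  have hsrc : ∀ e ∈ Ec, e.1 ∈ Vc ∧ FreeGroup.of e.2 • e.1 ∈ Vc := by
    intro e he
    rw [hEc, Finset.mem_image] at he
    obtain ⟨⟨v, t⟩, hvt, rfl⟩ := he
    have hv := (Finset.mem_product.1 hvt).1
    simp only [edge_eq]
    refine ⟨hsV v hv _, ?_⟩
    rw [smul_smul, ← s_tgtIdx]
    exact hsV v hv _
  let Ψ : (Ec → A) →* A × (Q → A) :=
    { toFun := fun φ => (pathVal (extOne Ec φ) (FreeGroup.mk lh) p,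
        fun v => pathVal (extOne Ec φ) (D.R ^ n) v.1)
      map_one' := by
        have h1 : extOne Ec (1 : Ec → A) = (1 : Ω × X → A) := by
          funext e; simp [extOne]
        have h2 : ∀ w (ω : Ω), pathVal (1 : Ω × X → A) w ω = 1 := by
          intro w ω
          have := pathVal_cochain_mul (1 : Ω × X → A) 1 w ω
          rw [one_mul] at this
          exact (mul_eq_left.1 this.symm)
        rw [h1]
        ext <;> simp [h2]
      map_mul' := by
        intro φ ψ
        rw [extOne_mul]
        ext <;> simp [pathVal_cochain_mul] }
  let δ : (Vc → A) → (Ec → A) := fun f e =>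
    f ⟨_, (hsrc e e.2).2⟩ * (f ⟨_, (hsrc e e.2).1⟩)⁻¹
  have hker : ∀ φ : Ψ.ker, ∃ f, δ f = φ := by
    rintro ⟨φ, hφ⟩
    have h1 : pathVal (extOne Ec φ) (FreeGroup.mk lh) p = 1 := congrArg Prod.fst hφ
    have h2 : ∀ v ∈ Q, pathVal (extOne Ec φ) (D.R ^ n) v = 1 := fun v hv =>
      congrFun (congrArg Prod.snd hφ) ⟨v, hv⟩
    obtain ⟨φ', hφ1, hφ2⟩ := hE A (extOne Ec φ) (by
      intro v hv
      by_cases hf : D.R • v = v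
      · rw [pathVal_pow_period _ _ _ hf, hApow]
      · obtain ⟨k, hk⟩ := hQ v ((hPA v).2 hv) hf
        exact pathVal_R_shift _ v k hv.1 (h2 _ hk))
    have h3 : pathVal φ' (FreeGroup.mk lh) p = 1 := by
      rw [← h1]
      exact pathVal_congr _ _ _ _ (fun e he => hφ1 e (hlE e he))
    have h4 := hSt A φ' h3 hφ2
    choose g hg using htr
    have h5 : ∀ (w : FreeGroup X), pathVal φ' w p = pathVal φ' (g (w • p)) p := by
      intro w
      have e1 := h4 ((g (w • p))⁻¹ * w) (by rw [mul_smul, inv_smul_eq_iff, hg])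
      have e2 := pathVal_mul φ' (g (w • p)) ((g (w • p))⁻¹ * w) p
      rw [mul_inv_cancel_left, e1, mul_one, mul_smul] at e2
      rw [e2]
      congr 1
      rw [inv_smul_eq_iff, hg]
    refine ⟨fun ω => pathVal φ' (g ω) p, ?_⟩
    funext e
    have e1 : φ e = φ' e := by
      rw [hφ1, extOne_mem]
      obtain ⟨⟨v, t⟩, hvt, h⟩ := Finset.mem_image.1 e.2
      rw [← h]
      exact ((hPA v).1 (Finset.mem_product.1 hvt).1).2 t
    have e2 := pathVal_mul φ' (FreeGroup.of e.1.2) (g e.1.1) p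
    rw [h5, hg, pathVal_of, mul_smul, hg] at e2
    simp only [δ]
    rw [e2, e1, mul_inv_cancel_right]
  choose f hf using hker
  have hfi : Function.Injective f := by
    intro a b hab
    apply Subtype.ext
    rw [← hf, ← hf, hab]
  have c1 : Nat.card Ψ.ker ≤ q ^ Vc.card := by
    have := Nat.card_le_card_of_injective f hfi
    rw [Nat.card_fun, hA] at this
    simpa using this
  have c2 : Nat.card Ψ.range ≤ q * q ^ Q.card := by
    have := Nat.card_le_card_of_injective (Subtype.val : Ψ.range → A × (Q → A))
      Subtype.val_injective
    rw [Nat.card_prod, Nat.card_fun, hA] at this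
    simpa using this
  have c3 : Nat.card (Ec → A) = q ^ Ec.card := by
    rw [Nat.card_fun, hA]; simp
  have c4 := Subgroup.card_mul_index Ψ.ker
  rw [Subgroup.index_ker, c3] at c4
  have c5 : q ^ Ec.card ≤ q ^ (Vc.card + Q.card + 1) := by
    rw [← c4]
    calc _ ≤ q ^ Vc.card * (q * q ^ Q.card) := Nat.mul_le_mul c1 c2
      _ = _ := by ring
  exact (Nat.pow_le_pow_iff_right hq.one_lt).1 c5

end CycData

/-! ### Short paths -/

section Reach
variable {X : Type} {Ω : Type} [MulAction (FreeGroup X) Ω]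

lemma wordEdges_labels (l : List (X × Bool)) (ω : Ω) :
    (wordEdges l ω).map Prod.snd = l.map Prod.fst := by
  induction l with
  | nil => rfl
  | cons p l ih => simp [wordEdges, ih, edgeOf]

/-- `ω` can be reached from `p` along edges in `E` -/
def Reach (E : Set (Ω × X)) (p ω : Ω) : Prop :=
  ∃ l : List (X × Bool), FreeGroup.mk l • p = ω ∧ ∀ e ∈ wordEdges l p, e ∈ E

lemma Reach.step {E : Set (Ω × X)} {p u : Ω} (h : Reach E p u) (a : X × Bool)
    (ha : edgeOf a u ∈ E) : Reach E p (ltr a • u) := by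
  obtain ⟨l, rfl, hl⟩ := h
  refine ⟨a :: l, by rw [mk_cons_ltr, mul_smul], ?_⟩
  intro e he
  simp only [wordEdges, List.mem_cons] at he
  rcases he with rfl | he
  · exact ha
  · exact hl e he

lemma edgeOf_not (x : X) (b : Bool) (u : Ω) :
    edgeOf (x, !b) (ltr (x, b) • u) = edgeOf (x, b) u := by
  cases b
  · simp [edgeOf]
  · have h := ltr_not x true
    simp only [Bool.not_true] at h
    simp [edgeOf, h]

lemma reach_step_iff {E : Set (Ω × X)} {p u : Ω} (a : X × Bool)
    (ha : edgeOf a u ∈ E) : Reach E p (ltr a • u) ↔ Reach E p u := by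
  refine ⟨fun h => ?_, fun h => h.step a ha⟩
  obtain ⟨x, b⟩ := a
  have := h.step (x, !b) (by rwa [edgeOf_not])
  rwa [ltr_not, inv_smul_smul] at this

open Classical in
/-- the cochain given by `π` on the reachable part -/
noncomputable def reachCochain {K : Type} [Group K] (π : FreeGroup X →* K) (E : Set (Ω × X))
    (p : Ω) : Ω × X → K := fun e => if Reach E p e.1 then π (FreeGroup.of e.2) else 1

open Classical in
lemma pathVal_reachCochain {K : Type} [Group K] (π : FreeGroup X →* K) (E : Set (Ω × X))
    (p : Ω) (l : List (X × Bool)) (ω : Ω) (h : ∀ e ∈ wordEdges l ω, e ∈ E) :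
    (Reach E p (FreeGroup.mk l • ω) ↔ Reach E p ω) ∧
    pathVal (reachCochain π E p) (FreeGroup.mk l) ω =
      if Reach E p ω then π (FreeGroup.mk l) else 1 := by
  induction l with
  | nil =>
    rw [← FreeGroup.one_eq_mk, pathVal_one]
    simp
  | cons a l ih =>
    obtain ⟨ih1, ih2⟩ := ih (fun e he => h e (by simp [wordEdges, he]))
    have ha : edgeOf a (FreeGroup.mk l • ω) ∈ E := h _ (by simp [wordEdges])
    have hs := reach_step_iff (p := p) a ha
    refine ⟨by rw [mk_cons_ltr, mul_smul, hs, ih1], ?_⟩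
    rw [pathVal_cons, ih2, pathVal_ltr, mk_cons_ltr, map_mul]
    have hu : Reach E p (edgeOf a (FreeGroup.mk l • ω)).1 ↔ Reach E p ω := by
      rcases a with ⟨x, b⟩
      cases b
      · exact hs.trans ih1
      · exact ih1
    simp only [reachCochain, hu]
    by_cases hr : Reach E p ω
    · simp only [hr, if_true]
      rw [ltr_eq a]
      rcases a with ⟨x, b⟩
      cases b <;> simp [edgeOf]
    · simp only [hr, if_false]
      cases a.2 <;> simp

lemma exists_short_path (E : Finset (Ω × X)) (p ω : Ω) (h : Reach (E : Set (Ω × X)) p ω) :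
    ∃ l : List (X × Bool), FreeGroup.mk l • p = ω ∧ (∀ e ∈ wordEdges l p, e ∈ E) ∧
      l.length ≤ 2 * E.card := by
  classical
  let pr : ℕ → Prop := fun m => ∃ l : List (X × Bool), l.length = m ∧ FreeGroup.mk l • p = ω ∧
    ∀ e ∈ wordEdges l p, e ∈ E
  have hex : ∃ m, pr m := by
    obtain ⟨l, h1, h2⟩ := h
    exact ⟨_, l, rfl, h1, h2⟩
  obtain ⟨l, hl, h1, h2⟩ := Nat.find_spec hex
  refine ⟨l, h1, h2, ?_⟩
  let V : Finset Ω := insert p (E.image Prod.fst ∪ E.image (fun e => FreeGroup.of e.2 • e.1))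
  have hV : V.card ≤ 2 * E.card + 1 := by
    refine (Finset.card_insert_le _ _).trans ?_
    have a1 := Finset.card_union_le (E.image Prod.fst)
      (E.image (fun e => FreeGroup.of e.2 • e.1))
    have a2 : (E.image Prod.fst).card ≤ E.card := Finset.card_image_le
    have a3 : (E.image (fun e => FreeGroup.of e.2 • e.1)).card ≤ E.card := Finset.card_image_le
    omega
  have hsuf : ∀ i, ∀ e ∈ wordEdges (l.drop i) p, e ∈ E := by
    intro i e he
    apply h2
    rw [← List.take_append_drop i l, wordEdges_append]
    exact List.mem_append_right _ he
  have hmem : ∀ i, FreeGroup.mk (l.drop i) • p ∈ V := by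
    intro i
    have := hsuf i
    cases hd : l.drop i with
    | nil =>
      rw [← FreeGroup.one_eq_mk, one_smul]
      exact Finset.mem_insert_self _ _
    | cons a m =>
      rw [hd] at this
      have ha : edgeOf a (FreeGroup.mk m • p) ∈ E := this _ (by simp [wordEdges])
      apply Finset.mem_insert_of_mem
      rw [mk_cons_ltr, mul_smul, Finset.mem_union, Finset.mem_image, Finset.mem_image]
      rcases a with ⟨x, b⟩
      cases b
      · exact Or.inl ⟨_, ha, rfl⟩
      · exact Or.inr ⟨_, ha, rfl⟩
  have hinj : ∀ i j, i < j → j ≤ l.length →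
      FreeGroup.mk (l.drop i) • p ≠ FreeGroup.mk (l.drop j) • p := by
    intro i j hij hj he
    have hlt : (l.take i ++ l.drop j).length < Nat.find hex := by
      rw [← hl]; simp; omega
    apply Nat.find_min hex hlt
    refine ⟨_, rfl, ?_, ?_⟩
    · rw [← FreeGroup.mul_mk, mul_smul, ← he, ← mul_smul, FreeGroup.mul_mk,
        List.take_append_drop, h1]
    · intro e hmem'
      rw [wordEdges_append, ← he] at hmem'
      rcases List.mem_append.1 hmem' with h | h
      · apply h2
        rw [← List.take_append_drop i l, wordEdges_append]
        exact List.mem_append_left _ (by simpa using h)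
      · exact hsuf j e h
  have hc := Finset.card_le_card_of_injOn (s := Finset.range (l.length + 1)) (t := V)
    (fun i => FreeGroup.mk (l.drop i) • p) (fun i _ => hmem i) (by
      intro i hi j hj he
      simp only [Finset.coe_range, Set.mem_Iio] at hi hj
      rcases lt_trichotomy i j with h | h | h
      · exact absurd he (hinj i j h (by omega))
      · exact h
      · exact absurd he.symm (hinj j i h (by omega)))
  rw [Finset.card_range] at hc
  omega

end Reach

namespace CycData
variable {X : Type} {D : CycData X} {Ω : Type} [MulAction (FreeGroup X) Ω]

open Classical in
theorem short_conjugator [LinearOrder (FreeGroup X)]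
    (hconj : ∀ c a b : FreeGroup X, a < b → c * a * c⁻¹ < c * b * c⁻¹)
    (hdist : ∀ a b, a < D.L → b < D.L → D.r a = D.r b → a = b)
    (hmin : ∀ t, D.r 0 ≤ D.r t)
    {n : ℕ} (hn : 1 < n) {B : Set Ω} (hBf : B.Finite) (hB : ∀ v ∈ B, D.R ^ n • v = v)
    (p q : Ω) (htr : ∀ ω : Ω, ∃ g : FreeGroup X, g • p = ω)
    (lh : List (X × Bool))
    (hSt : ∀ (K : Type) [Group K] (φ : Ω × X → K), pathVal φ (FreeGroup.mk lh) p = 1 →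
      (∀ v ∈ B, pathVal φ (D.R ^ n) v = 1) → ∀ j : FreeGroup X, j • p = p → pathVal φ j p = 1)
    (hRel : ∀ (K : Type) [Group K] (φ : Ω × X → K), (∀ v ∈ B, pathVal φ (D.R ^ n) v = 1) →
      pathVal φ (FreeGroup.mk lh) q = 1 → pathVal φ (FreeGroup.mk lh) p = 1)
    {G : Type} [Group G] (π : FreeGroup X →* G) (hπ : π (D.R ^ n) = 1)
    (hh : π (FreeGroup.mk lh) ≠ 1) :
    ∃ l : List (X × Bool), FreeGroup.mk l • p = q ∧
      l.length ≤ 2 * ((4 * lh.length + 2) * D.L + 2 * lh.length) ∧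
      ∀ a ∈ l, a.1 ∈ (Finset.range D.L).image (fun t => (D.y t).1) ∪
        (lh.map Prod.fst).toFinset := by
  let El : Finset (Ω × X) := (wordEdges lh p).toFinset ∪ (wordEdges lh q).toFinset
  have hElc : El.card ≤ 2 * lh.length := by
    have a1 := Finset.card_union_le (wordEdges lh p).toFinset (wordEdges lh q).toFinset
    have a2 := List.toFinset_card_le (wordEdges lh p)
    have a3 := List.toFinset_card_le (wordEdges lh q)
    rw [wordEdges_length] at a2 a3
    have : El.card ≤ (wordEdges lh p).toFinset.card + (wordEdges lh q).toFinset.card := a1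
    omega
  obtain ⟨E, hEl, hE, hfree⟩ := exists_minimal D n (by omega) B hBf hB El
  have hlp : ∀ e ∈ wordEdges lh p, e ∈ El := fun e he => by simp [El, he]
  have hlq : ∀ e ∈ wordEdges lh q, e ∈ El := fun e he => by simp [El, he]
  have hedge_inj : Function.Injective (fun v : Ω => D.edge v 0) := by
    intro v w h
    simp only [edge_eq, Prod.mk.injEq, and_true] at h
    exact MulAction.injective _ h
  have hPf : {v | D.Alive n (E : Set (Ω × X)) v}.Finite :=
    Set.Finite.of_finite_image
      (E.finite_toSet.subset (t := (fun v : Ω => D.edge v 0) '' _)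
        (by rintro _ ⟨v, hv, rfl⟩; exact hv.2 0))
      hedge_inj.injOn
  let P := hPf.toFinset
  have hPA : ∀ v, v ∈ P ↔ D.Alive n (E : Set (Ω × X)) v := fun v => by simp [P]
  have hP : ∀ v ∈ P, ∀ k : ℕ, D.R ^ k • v ∈ P := fun v hv k =>
    (hPA _).2 (((hPA v).1 hv).pow k)
  obtain ⟨Q, hQP, hQc, hQ⟩ := orbit_halving P hP
  obtain ⟨q', hq', hq'n⟩ := Nat.exists_prime_and_dvd (show n ≠ 1 by omega)
  have c1 := star_count hq' hq'n hE p htr lh (fun e he => hEl (hlp e he)) hSt P Q hPA hQ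
  have c2 := order_count (P := P) hconj hdist hP
  have c3 : (P.filter (fun v => D.PTop P v 0)).card ≤ El.card := by
    apply Finset.card_le_card_of_injOn (fun v => D.edge v 0)
    · intro v hv
      have hv' := Finset.mem_filter.1 hv
      apply hfree v 0 ((hPA v).1 hv'.1) D.hL
      intro w i hw hi he
      exact free_of_ptop_zero hconj hdist hmin hv'.2 ((hPA w).2 hw) hi he
    · exact hedge_inj.injOn
  have c4 := Finset.card_filter_add_card_filter_not (s := P) (fun v => D.PTop P v 0)
  set Ec := (P ×ˢ Finset.range D.L).image (fun a => D.edge a.1 a.2) with hEc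
  have c5 : Ec.card ≤ P.card * D.L := by
    refine Finset.card_image_le.trans ?_
    rw [Finset.card_product, Finset.card_range]
  have c6 : P.card ≤ 4 * lh.length + 2 := by omega
  have c7 : Ec.card ≤ (4 * lh.length + 2) * D.L := c5.trans (Nat.mul_le_mul_right _ c6)
  let Es := Ec ∪ El
  have c8 : Es.card ≤ (4 * lh.length + 2) * D.L + 2 * lh.length :=
    (Finset.card_union_le _ _).trans (Nat.add_le_add c7 hElc)
  have hEcE : Ec ⊆ E := by
    intro e he
    obtain ⟨⟨v, t⟩, hvt, rfl⟩ := Finset.mem_image.1 he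
    exact ((hPA v).1 (Finset.mem_product.1 hvt).1).2 t
  have hEsE : Es ⊆ E := Finset.union_subset hEcE hEl
  have hreach : Reach (Es : Set (Ω × X)) p q := by
    by_contra hnr
    have hself : Reach (Es : Set (Ω × X)) p p := ⟨[], by
      rw [← FreeGroup.one_eq_mk, one_smul], by simp [wordEdges]⟩
    obtain ⟨φ', h1, h2⟩ := hE G (reachCochain π Es p) (by
      intro v hv
      have hin : ∀ e ∈ wordEdges (D.seg 0 (n * D.L)) v, e ∈ (Es : Set (Ω × X)) := by
        intro e he
        rw [mem_wordEdges_seg_zero] at he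
        obtain ⟨j, _, rfl⟩ := he
        rw [edge_decomp]
        apply Finset.mem_union_left
        exact Finset.mem_image.2 ⟨(_, _), Finset.mem_product.2
          ⟨hP v ((hPA v).2 hv) _, Finset.mem_range.2 (Nat.mod_lt _ D.hL)⟩, rfl⟩
      rw [R_pow_eq_mk, (pathVal_reachCochain π _ p _ v hin).2, ← R_pow_eq_mk, hπ, ite_self])
    have e1 : pathVal φ' (FreeGroup.mk lh) p = π (FreeGroup.mk lh) := by
      rw [pathVal_congr φ' (reachCochain π Es p) lh p (fun e he => h1 e (hEl (hlp e he))),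
        (pathVal_reachCochain π _ p _ p
          (fun e he => Finset.mem_union_right _ (hlp e he))).2, if_pos hself]
    have e2 : pathVal φ' (FreeGroup.mk lh) q = 1 := by
      rw [pathVal_congr φ' (reachCochain π Es p) lh q (fun e he => h1 e (hEl (hlq e he))),
        (pathVal_reachCochain π _ p _ q
          (fun e he => Finset.mem_union_right _ (hlq e he))).2, if_neg hnr]
    exact hh (by rw [← e1]; exact hRel G φ' h2 e2)
  obtain ⟨l, hl1, hl2, hl3⟩ := exists_short_path Es p q hreach
  refine ⟨l, hl1, hl3.trans (Nat.mul_le_mul_left _ c8), ?_⟩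
  intro a ha
  have : a.1 ∈ (wordEdges l p).map Prod.snd := by
    rw [wordEdges_labels]; exact List.mem_map_of_mem ha
  obtain ⟨e, he, hea⟩ := List.mem_map.1 this
  rw [← hea]
  have hlab : ∀ ω : Ω, e ∈ wordEdges lh ω → e.2 ∈ (lh.map Prod.fst).toFinset := by
    intro ω h
    rw [List.mem_toFinset, ← wordEdges_labels lh ω]
    exact List.mem_map_of_mem h
  rcases Finset.mem_union.1 (hl2 e he) with h | h
  · apply Finset.mem_union_left
    obtain ⟨⟨v, t⟩, hvt, rfl⟩ := Finset.mem_image.1 h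
    rw [edge_eq]
    exact Finset.mem_image.2 ⟨t, (Finset.mem_product.1 hvt).2, rfl⟩
  · apply Finset.mem_union_right
    rcases Finset.mem_union.1 h with h | h
    · exact hlab p (List.mem_toFinset.1 h)
    · exact hlab q (List.mem_toFinset.1 h)

end CycData

/-! ### Centralizers in one-relator groups with torsion -/

lemma finite_lists_of_letters {X : Type} (S : Finset X) (N : ℕ) :
    {l : List (X × Bool) | l.length ≤ N ∧ ∀ a ∈ l, a.1 ∈ S}.Finite := by
  have h := List.finite_length_le (S × Bool) N
  refine (h.image (List.map (fun a : S × Bool => ((a.1 : X), a.2)))).subset ?_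
  rintro l ⟨hl, hS⟩
  refine ⟨l.attach.map (fun a => (⟨a.1.1, hS a.1 a.2⟩, a.1.2)), by simpa using hl, ?_⟩
  rw [List.map_map]
  exact List.attach_map_subtype_val l

lemma exists_finite_conj {F : Type} [Group F] (r w : F)
    (hw : w ∈ Subgroup.normalClosure {r}) :
    ∃ U : Set F, U.Finite ∧ w ∈ Subgroup.closure ((fun u => u * r * u⁻¹) '' U) := by
  rw [Subgroup.normalClosure] at hw
  induction hw using Subgroup.closure_induction with
  | mem x hx =>
    rw [Group.mem_conjugatesOfSet_iff] at hx
    obtain ⟨a, ha, hc⟩ := hx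
    rw [Set.mem_singleton_iff] at ha
    subst ha
    obtain ⟨c, rfl⟩ := isConj_iff.1 hc
    exact ⟨{c}, Set.finite_singleton c, Subgroup.subset_closure ⟨c, rfl, rfl⟩⟩
  | one => exact ⟨∅, Set.finite_empty, one_mem _⟩
  | mul x y _ _ hx hy =>
    obtain ⟨U, hU, hx⟩ := hx
    obtain ⟨V, hV, hy⟩ := hy
    refine ⟨U ∪ V, hU.union hV, mul_mem ?_ ?_⟩
    · exact Subgroup.closure_mono (Set.image_mono Set.subset_union_left) hx
    · exact Subgroup.closure_mono (Set.image_mono Set.subset_union_right) hy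
  | inv x _ hx =>
    obtain ⟨U, hU, hx⟩ := hx
    exact ⟨U, hU, inv_mem hx⟩

theorem centralizerControl_of_cycData {X : Type} {G : Type} [Group G] (D : CycData X)
    [LinearOrder (FreeGroup X)]
    (hconj : ∀ c a b : FreeGroup X, a < b → c * a * c⁻¹ < c * b * c⁻¹)
    (hdist : ∀ a b, a < D.L → b < D.L → D.r a = D.r b → a = b)
    (hmin : ∀ t, D.r 0 ≤ D.r t) {n : ℕ} (hn : 1 < n)
    (π : FreeGroup X →* G) (hsurj : Function.Surjective π)
    (hker : π.ker = Subgroup.normalClosure {D.R ^ n}) : CentralizerControl G := by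
  classical
  intro h hh
  obtain ⟨hw, hhw⟩ := hsurj h
  obtain ⟨lh, rfl⟩ : ∃ lh, FreeGroup.mk lh = hw := ⟨hw.toWord, FreeGroup.mk_toWord⟩
  set ĥ := FreeGroup.mk lh with hĥ
  have hπR : π (D.R ^ n) = 1 := by
    rw [← MonoidHom.mem_ker, hker]
    exact Subgroup.subset_normalClosure rfl
  refine ⟨(fun l => π (FreeGroup.mk l)) '' _, (finite_lists_of_letters
    ((Finset.range D.L).image (fun t => (D.y t).1) ∪ (lh.map Prod.fst).toFinset)
    (2 * ((4 * lh.length + 2) * D.L + 2 * lh.length))).image _, ?_⟩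
  intro g hg
  obtain ⟨gw, rfl⟩ := hsurj g
  have hwk : gw⁻¹ * ĥ * gw * ĥ⁻¹ ∈ Subgroup.normalClosure {D.R ^ n} := by
    rw [← hker, MonoidHom.mem_ker]
    simp only [map_mul, map_inv, hhw]
    rw [mul_assoc (π gw)⁻¹, ← hg]
    group
  obtain ⟨U, hU, hwU⟩ := exists_finite_conj _ _ hwk
  let gens : Set (FreeGroup X) := insert ĥ ((fun u => u * D.R ^ n * u⁻¹) '' U)
  let J : Subgroup (FreeGroup X) := Subgroup.closure gens
  have hhJ : ĥ ∈ J := Subgroup.subset_closure (Set.mem_insert _ _)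
  have huJ : ∀ u ∈ U, u * D.R ^ n * u⁻¹ ∈ J := fun u hu =>
    Subgroup.subset_closure (Set.mem_insert_of_mem _ ⟨u, hu, rfl⟩)
  have hwJ : gw⁻¹ * ĥ * gw * ĥ⁻¹ ∈ J :=
    Subgroup.closure_mono (Set.subset_insert _ _) hwU
  let p : FreeGroup X ⧸ J := ((1 : FreeGroup X) : FreeGroup X ⧸ J)
  have hp : ∀ w : FreeGroup X, w • p = (w : FreeGroup X ⧸ J) := by
    intro w
    change ((w * 1 : FreeGroup X) : FreeGroup X ⧸ J) = _
    rw [mul_one]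
  have hpJ : ∀ w : FreeGroup X, w • p = p ↔ w ∈ J := by
    intro w
    rw [hp, eq_comm, QuotientGroup.eq]
    simp
  let B : Set (FreeGroup X ⧸ J) := (fun u : FreeGroup X => u⁻¹ • p) '' U
  have hB : ∀ v ∈ B, D.R ^ n • v = v := by
    rintro _ ⟨u, hu, rfl⟩
    have := (hpJ _).2 (huJ u hu)
    rw [mul_smul, mul_smul] at this
    simp only
    rw [eq_inv_smul_iff, this]
  have hconjp : ∀ (K : Type) [Group K] (φ : (FreeGroup X ⧸ J) × X → K),
      (∀ v ∈ B, pathVal φ (D.R ^ n) v = 1) → ∀ u ∈ U,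
      pathVal φ (u * D.R ^ n * u⁻¹) p = 1 := by
    intro K _ φ hφ u hu
    exact pathVal_conj_one φ u _ p (hB _ ⟨u, hu, rfl⟩) (hφ _ ⟨u, hu, rfl⟩)
  have hclos : ∀ (K : Type) [Group K] (φ : (FreeGroup X ⧸ J) × X → K) (A : Set (FreeGroup X)),
      A ⊆ J → (∀ a ∈ A, pathVal φ a p = 1) → ∀ j ∈ Subgroup.closure A, pathVal φ j p = 1 := by
    intro K _ φ A hAJ hA j hj
    have hle : Subgroup.closure A ≤ J := (Subgroup.closure_le J).2 hAJ
    induction hj using Subgroup.closure_induction with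
    | mem x hx => exact hA x hx
    | one => exact pathVal_one _ _
    | mul x y hx hy ihx ihy =>
      rw [pathVal_mul, (hpJ y).2 (hle hy), ihx, ihy, mul_one]
    | inv x hx ih =>
      rw [pathVal_inv, (hpJ x⁻¹).2 (inv_mem (hle hx)), ih, inv_one]
  have hSt : ∀ (K : Type) [Group K] (φ : (FreeGroup X ⧸ J) × X → K),
      pathVal φ (FreeGroup.mk lh) p = 1 →
      (∀ v ∈ B, pathVal φ (D.R ^ n) v = 1) →
      ∀ j : FreeGroup X, j • p = p → pathVal φ j p = 1 := by
    intro K _ φ h1 h2 j hj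
    refine hclos K φ gens Subgroup.subset_closure ?_ j ((hpJ j).1 hj)
    rintro a (rfl | ⟨u, hu, rfl⟩)
    · exact h1
    · exact hconjp K φ h2 u hu
  have hRel : ∀ (K : Type) [Group K] (φ : (FreeGroup X ⧸ J) × X → K),
      (∀ v ∈ B, pathVal φ (D.R ^ n) v = 1) →
      pathVal φ (FreeGroup.mk lh) (gw • p) = 1 → pathVal φ (FreeGroup.mk lh) p = 1 := by
    intro K _ φ h2 h1
    have e1 : pathVal φ (gw⁻¹ * ĥ * gw * ĥ⁻¹) p = 1 := by
      refine hclos K φ _ ?_ ?_ _ hwU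
      · rintro _ ⟨u, hu, rfl⟩; exact huJ u hu
      · rintro _ ⟨u, hu, rfl⟩; exact hconjp K φ h2 u hu
    have hcj : gw⁻¹ * ĥ * gw ∈ J := by
      have := mul_mem hwJ hhJ
      rwa [inv_mul_cancel_right] at this
    have hq : ĥ • gw • p = gw • p := by
      have := (hpJ _).2 hcj
      rw [mul_smul, mul_smul] at this
      rwa [inv_smul_eq_iff] at this
    have e2 : pathVal φ (gw⁻¹ * ĥ * gw) p = 1 := by
      have := pathVal_conj_one φ gw⁻¹ ĥ p (by rwa [inv_inv]) (by rwa [inv_inv])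
      rwa [inv_inv] at this
    have e3 := pathVal_mul φ (gw⁻¹ * ĥ * gw * ĥ⁻¹) ĥ p
    rw [inv_mul_cancel_right, e2, (hpJ ĥ).2 hhJ, e1, one_mul] at e3
    exact e3.symm
  obtain ⟨l, hl1, hl2, hl3⟩ := CycData.short_conjugator (D := D) hconj hdist hmin hn
    (hU.image (fun u : FreeGroup X => u⁻¹ • p)) hB p (gw • p)
    (fun ω => by
      obtain ⟨w, rfl⟩ := QuotientGroup.mk_surjective ω
      exact ⟨w, hp w⟩) lh hSt hRel π hπR (by rw [hhw]; exact hh)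
  refine ⟨_, ⟨l, ⟨hl2, by convert hl3⟩, rfl⟩, ?_⟩
  have hJ1 : (FreeGroup.mk l)⁻¹ * gw ∈ J := by
    rw [← hpJ, mul_smul, inv_smul_eq_iff, hl1]
  have hJ2 : ∀ j ∈ J, π j ∈ Subgroup.zpowers h := by
    have : J ≤ (Subgroup.zpowers h).comap π := by
      refine (Subgroup.closure_le _).2 ?_
      rintro a (rfl | ⟨u, hu, rfl⟩)
      · change π ĥ ∈ Subgroup.zpowers h
        rw [hhw]; exact Subgroup.mem_zpowers h
      · change π (u * D.R ^ n * u⁻¹) ∈ Subgroup.zpowers h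
        rw [map_mul, map_mul, hπR, mul_one, map_inv, mul_inv_cancel]
        exact one_mem _
    exact fun j hj => this hj
  obtain ⟨i, hi⟩ := Subgroup.mem_zpowers_iff.1 (hJ2 _ hJ1)
  refine ⟨i, ?_⟩
  rw [hi, map_mul, map_inv, mul_inv_cancel_left]


/-- A virtually-ℤ subgroup `C` of a one-relator group with torsion which
is not contained in any infinite dihedral subgroup is contained in a malnormal infinite
cyclic subgroup. -/
theorem statement_6 {X : Type} [Nontrivial X] (R : FreeGroup X) (n : ℕ)
    (hn : 1 < n) (hR : ∀ (S : FreeGroup X) (k : ℕ), 1 ≤ k → R = S ^ k → k = 1)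
    (C : Subgroup (PresentedGroup {R ^ n})) (hC : VirtuallyZ C)
    (hD : ¬ ∃ D : Subgroup (PresentedGroup {R ^ n}),
        C ≤ D ∧ Nonempty (D ≃* DihedralGroup 0)) :
    ∃ M : Subgroup (PresentedGroup {R ^ n}),
      M.IsMalnormal ∧ Nonempty (M ≃* Multiplicative ℤ) ∧ C ≤ M := by
  obtain ⟨lo, hconj⟩ := exists_conj_invariant_order X
  obtain ⟨D, hmin, hdist, c, hc⟩ := exists_cycData R hR
  have hcn : D.R ^ n = c * R ^ n * c⁻¹ := by rw [hc, conj_pow]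
  have hN : Subgroup.normalClosure {R ^ n} = Subgroup.normalClosure {D.R ^ n} := by
    apply le_antisymm
    · apply Subgroup.normalClosure_le_normal
      rintro x rfl
      have h1 : D.R ^ n ∈ Subgroup.normalClosure {D.R ^ n} := Subgroup.subset_normalClosure rfl
      have h2 := Subgroup.normalClosure_normal.conj_mem _ h1 c⁻¹
      have h3 : c⁻¹ * D.R ^ n * c⁻¹⁻¹ = R ^ n := by rw [hcn]; group
      rwa [h3] at h2
    · apply Subgroup.normalClosure_le_normal
      rintro x rfl
      have h1 : R ^ n ∈ Subgroup.normalClosure {R ^ n} := Subgroup.subset_normalClosure rfl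
      have h2 := Subgroup.normalClosure_normal.conj_mem _ h1 c
      rwa [← hcn] at h2
  have hG : CentralizerControl (PresentedGroup {R ^ n}) := by
    refine centralizerControl_of_cycData D hconj hdist hmin hn
      (QuotientGroup.mk' (Subgroup.normalClosure {R ^ n})) (QuotientGroup.mk'_surjective _) ?_
    exact (QuotientGroup.ker_mk' (Subgroup.normalClosure {R ^ n})).trans hN
  exact malnormal_of_centralizerControl hG C hC hD
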